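/- arXiv:1507.03099 — 2 statements merged into one kernel-verified Lean document; each statement's English description precedes it below -/
import Mathlib

section
/- For all nonnegative integers k and n, B_3(3^k·n + 3^k − 1) = 3^{2k}·B_3(n). -/
/-- The hook length of the cell `(i, j)` in a Young diagram `μ`:
arm length + leg length + 1. -/
def YoungDiagram.hookLength (μ : YoungDiagram) (i j : ℕ) : ℕ :=
  μ.rowLen i + μ.colLen j - i - j - 1

/-- A Young diagram (equivalently, a partition) is a 3-core if none of its
hook numbers is divisible by 3. -/
def YoungDiagram.IsThreeCore (μ : YoungDiagram) : Prop :=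
  ∀ c ∈ μ.cells, ¬ (3 ∣ μ.hookLength c.1 c.2)

/-- `a3 n` is the number of 3-core partitions of `n`. -/
noncomputable def a3 (n : ℕ) : ℕ :=
  Nat.card {μ : YoungDiagram // μ.card = n ∧ μ.IsThreeCore}

/-- `A3 n` is the number of partition pairs of `n` in which each partition is a 3-core. -/
noncomputable def A3 (n : ℕ) : ℕ :=
  Nat.card {p : YoungDiagram × YoungDiagram //
    p.1.card + p.2.card = n ∧ p.1.IsThreeCore ∧ p.2.IsThreeCore}

/-- `B3 n` is the number of partition triples of `n` in which each partition is a 3-core. -/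
noncomputable def B3 (n : ℕ) : ℕ :=
  Nat.card {p : YoungDiagram × YoungDiagram × YoungDiagram //
    p.1.card + p.2.1.card + p.2.2.card = n ∧
    p.1.IsThreeCore ∧ p.2.1.IsThreeCore ∧ p.2.2.IsThreeCore}

namespace ThreeCore

def F (p q i : ℕ) : ℕ :=
  if q < p then (if i < p - q then 2 * p - q - 1 - 2 * i else q - (i - (p - q)) / 2)
  else (if i < q - p then 2 * q - p - 2 * i else p - (i - (q - p)) / 2)

lemma F_step_p {p q : ℕ} (h : q ≤ p) (i : ℕ) : F (p + 1) q (i + 1) = F p q i := by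
  unfold F; split_ifs <;> omega

lemma F_step_q {p q : ℕ} (h : p ≤ q + 1) (i : ℕ) : F p (q + 1) (i + 1) = F p q i := by
  unfold F; split_ifs <;> omega

lemma F_anti (p q : ℕ) : Antitone (F p q) := by
  apply antitone_nat_of_succ_le
  intro i
  unfold F; split_ifs <;> omega

lemma F_zero {p q i : ℕ} (h : p + q ≤ i) : F p q i = 0 := by
  unfold F; split_ifs <;> omega

lemma F_pos {p q i : ℕ} (h : i < p + q) : 0 < F p q i := by
  unfold F; split_ifs <;> omega

lemma F_le (p q i : ℕ) : F p q i ≤ 2 * p + 2 * q := by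
  unfold F; split_ifs <;> omega

lemma F_sum (N : ℕ) : ∀ p q : ℕ, p + q = N →
    ((∑ i ∈ Finset.range N, F p q i : ℕ) : ℤ) = (p : ℤ) ^ 2 - p * q + q ^ 2 + q := by
  induction N with
  | zero =>
    intro p q h
    obtain ⟨rfl, rfl⟩ : p = 0 ∧ q = 0 := by omega
    simp
  | succ N ih =>
    intro p q h
    rw [Finset.sum_range_succ']
    by_cases hpq : q < p
    · obtain ⟨p, rfl⟩ : ∃ p', p = p' + 1 := ⟨p - 1, by omega⟩
      simp_rw [F_step_p (show q ≤ p by omega)]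
      have h0 : F (p + 1) q 0 = 2 * p + 1 - q := by
        unfold F; split_ifs <;> omega
      have h1 : ((2 * p + 1 - q : ℕ) : ℤ) = 2 * p + 1 - q := by omega
      rw [Nat.cast_add, ih p q (by omega), h0, h1]
      push_cast
      ring
    · obtain ⟨q, rfl⟩ : ∃ p', q = p' + 1 := ⟨q - 1, by omega⟩
      simp_rw [F_step_q (show p ≤ q + 1 by omega)]
      have h0 : F p (q + 1) 0 = 2 * q + 2 - p := by
        unfold F; split_ifs <;> omega
      have h1 : ((2 * q + 2 - p : ℕ) : ℤ) = 2 * q + 2 - p := by omega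
      rw [Nat.cast_add, ih p q (by omega), h0, h1]
      push_cast
      ring

def Step (f : ℕ → ℕ) : Prop :=
  ∀ i, f (i + 1) + 2 = f i ∨ f (i + 2) + 1 = f i ∨ f (i + 3) = f i

lemma F_Step (p q : ℕ) : Step (F p q) := by
  intro i
  unfold F; split_ifs <;> omega

lemma F_inj {p q p' q' : ℕ} (h : F p q = F p' q') : p = p' ∧ q = q' := by
  have hs : p + q = p' + q' := by
    rcases lt_trichotomy (p + q) (p' + q') with hl | hl | hl
    · have := F_pos hl
      rw [← h, F_zero le_rfl] at this; omega
    · exact hl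
    · have := F_pos hl
      rw [h, F_zero le_rfl] at this; omega
  have h0 := congrFun h 0
  unfold F at h0
  split_ifs at h0 <;> omega

lemma exists_F (N : ℕ) : ∀ f : ℕ → ℕ, Antitone f → Step f → (∀ i, N ≤ i → f i = 0) →
    ∃ p q, f = F p q := by
  induction N with
  | zero =>
    intro f _ _ h
    exact ⟨0, 0, funext fun i => by rw [h i (Nat.zero_le _), F_zero (by omega)]⟩
  | succ N ih =>
    intro f ha hs hN
    obtain ⟨p, q, hpq⟩ := ih (fun i => f (i + 1)) (fun a b hab => ha (by omega))
      (fun i => hs (i + 1)) (fun i hi => hN (i + 1) (by omega))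
    have hf : ∀ i, f (i + 1) = F p q i := fun i => congrFun hpq i
    have h01 : f 1 ≤ f 0 := ha (by omega)
    have hs0 := hs 0
    simp only [zero_add] at hs0
    have e1 := hf 0
    have e2 := hf 1
    have e3 := hf 2
    norm_num at e1 e2 e3
    have key : (q ≤ p ∧ f 0 = F (p + 1) q 0) ∨ (p ≤ q + 1 ∧ f 0 = F p (q + 1) 0) ∨
        (p = 0 ∧ q = 0 ∧ f 0 = 0) := by
      rcases hs0 with hh | hh | hh
      · by_cases c : q < p
        · left
          have : F (p + 1) q 0 = F p q 0 + 2 := by unfold F; split_ifs <;> omega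
          omega
        · right; left
          have : F p (q + 1) 0 = F p q 0 + 2 := by unfold F; split_ifs <;> omega
          omega
      · by_cases c1 : p = q
        · left
          have : F (p + 1) q 0 = F p q 1 + 1 := by unfold F; split_ifs <;> omega
          omega
        by_cases c2 : p = q + 1
        · right; left
          have : F p (q + 1) 0 = F p q 1 + 1 := by unfold F; split_ifs <;> omega
          omega
        · exfalso
          have : F p q 1 + 1 < F p q 0 := by unfold F; split_ifs <;> omega
          omega
      · right; right
        by_cases c : p = 0 ∧ q = 0
        · refine ⟨c.1, c.2, ?_⟩
          rw [← hh, e3, c.1, c.2, F_zero (by omega)]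
        · exfalso
          have : F p q 2 < F p q 0 := by unfold F; split_ifs <;> omega
          omega
    rcases key with ⟨h, h0⟩ | ⟨h, h0⟩ | ⟨rfl, rfl, h0⟩
    · refine ⟨p + 1, q, funext fun i => ?_⟩
      cases i with
      | zero => exact h0
      | succ i => rw [F_step_p h, hf]
    · refine ⟨p, q + 1, funext fun i => ?_⟩
      cases i with
      | zero => exact h0
      | succ i => rw [F_step_q h, hf]
    · refine ⟨0, 0, funext fun i => ?_⟩
      cases i with
      | zero => rw [h0, F_zero (by omega)]
      | succ i => rw [hf, F_zero (by omega), F_zero (by omega)]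

lemma rc (μ : YoungDiagram) (i j : ℕ) : j < μ.rowLen i ↔ i < μ.colLen j := by
  rw [← YoungDiagram.mem_iff_lt_rowLen, ← YoungDiagram.mem_iff_lt_colLen]

lemma colLen_eq (μ : YoungDiagram) (i j : ℕ) (h1 : j < μ.rowLen i)
    (h2 : μ.rowLen (i + 1) ≤ j) : μ.colLen j = i + 1 := by
  have a := (rc μ i j).1 h1
  have b := mt (rc μ (i + 1) j).2 (by omega)
  omega

lemma core_iff (μ : YoungDiagram) : μ.IsThreeCore ↔ Step μ.rowLen := by
  constructor
  · intro h i
    have a1 : μ.rowLen (i + 1) ≤ μ.rowLen i := μ.rowLen_anti _ _ (by omega)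
    have a2 : μ.rowLen (i + 2) ≤ μ.rowLen (i + 1) := μ.rowLen_anti _ _ (by omega)
    have a3 : μ.rowLen (i + 3) ≤ μ.rowLen (i + 2) := μ.rowLen_anti _ _ (by omega)
    by_contra hc
    push Not at hc
    obtain ⟨n1, n2, n3⟩ := hc
    have key : ∀ j, j < μ.rowLen i → μ.rowLen i + μ.colLen j - i - j - 1 ≠ 3 := by
      intro j hj he
      have := h (i, j) (by
        rw [YoungDiagram.mem_cells]; exact YoungDiagram.mem_iff_lt_rowLen.2 hj)
      apply this
      unfold YoungDiagram.hookLength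
      rw [he]
    by_cases c1 : μ.rowLen (i + 1) + 2 < μ.rowLen i
    · apply key (μ.rowLen i - 3) (by omega)
      rw [colLen_eq μ i _ (by omega) (by omega)]; omega
    by_cases c2 : μ.rowLen (i + 2) + 1 < μ.rowLen i
    · apply key (μ.rowLen i - 2) (by omega)
      rw [colLen_eq μ (i + 1) _ (by omega) (by rw [show i + 1 + 1 = i + 2 from rfl]; omega)]
      omega
    · apply key (μ.rowLen i - 1) (by omega)
      rw [colLen_eq μ (i + 2) _ (by omega) (by rw [show i + 2 + 1 = i + 3 from rfl]; omega)]
      omega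
  · intro h
    have key : ∀ k i j, μ.rowLen i + μ.colLen j ≠ i + j + 1 + 3 * k := by
      intro k
      induction k with
      | zero =>
        intro i j
        have := rc μ i j
        omega
      | succ k ih =>
        intro i j he
        have b1 := ih (i + 1) j
        have b2 := ih (i + 2) j
        have b3 := ih (i + 3) j
        rcases h i with hh | hh | hh <;> omega
    rintro ⟨i, j⟩ hc ⟨k, hk⟩
    rw [YoungDiagram.mem_cells] at hc
    have h1 := YoungDiagram.mem_iff_lt_rowLen.1 hc
    have h2 := YoungDiagram.mem_iff_lt_colLen.1 hc
    unfold YoungDiagram.hookLength at hk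
    simp only at hk
    exact key k i j (by omega)

def D (p q : ℕ) : YoungDiagram where
  cells := (Finset.range (p + q) ×ˢ Finset.range (2 * p + 2 * q)).filter fun c => c.2 < F p q c.1
  isLowerSet := by
    rintro ⟨i, j⟩ ⟨i', j'⟩ ⟨h1, h2⟩ h
    simp only [Finset.coe_filter, Finset.mem_product, Finset.mem_range, Set.mem_ofPred_eq] at *
    have := F_anti p q h1
    omega

lemma mem_D (p q i j : ℕ) : (i, j) ∈ D p q ↔ j < F p q i := by
  rw [← YoungDiagram.mem_cells]
  simp only [D, Finset.mem_filter, Finset.mem_product, Finset.mem_range]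
  refine ⟨fun h => h.2, fun h => ⟨⟨?_, ?_⟩, h⟩⟩
  · by_contra hc
    rw [F_zero (by omega)] at h; omega
  · have := F_le p q i
    omega

lemma rowLen_D (p q : ℕ) : (D p q).rowLen = F p q := by
  funext i
  have h : ∀ j, j < (D p q).rowLen i ↔ j < F p q i := fun j => by
    rw [← mem_D, YoungDiagram.mem_iff_lt_rowLen]
  have h1 := h (F p q i)
  have h2 := h ((D p q).rowLen i)
  omega

lemma card_D (p q : ℕ) : ((D p q).card : ℤ) = (p : ℤ) ^ 2 - p * q + q ^ 2 + q := by
  rw [← F_sum (p + q) p q rfl]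
  congr 1
  show ((Finset.range (p + q) ×ˢ Finset.range (2 * p + 2 * q)).filter
    fun c => c.2 < F p q c.1).card = _
  rw [Finset.card_filter, Finset.sum_product]
  refine Finset.sum_congr rfl fun i _ => ?_
  rw [← Finset.card_filter]
  have : (Finset.range (2 * p + 2 * q)).filter (fun j => j < F p q i) = Finset.range (F p q i) := by
    ext j
    have := F_le p q i
    simp only [Finset.mem_filter, Finset.mem_range]
    omega
  simp only [this, Finset.card_range]

lemma ext_rowLen {μ ν : YoungDiagram} (h : μ.rowLen = ν.rowLen) : μ = ν := by
  apply SetLike.ext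
  rintro ⟨i, j⟩
  rw [YoungDiagram.mem_iff_lt_rowLen, YoungDiagram.mem_iff_lt_rowLen, h]

abbrev Core := {μ : YoungDiagram // μ.IsThreeCore}

def toCore (c : ℕ × ℕ) : Core := ⟨D c.1 c.2, by rw [core_iff, rowLen_D]; exact F_Step _ _⟩

lemma toCore_bij : Function.Bijective toCore := by
  constructor
  · rintro ⟨p, q⟩ ⟨p', q'⟩ h
    have h1 : D p q = D p' q' := congrArg Subtype.val h
    have h2 := congrArg YoungDiagram.rowLen h1
    rw [rowLen_D, rowLen_D] at h2
    obtain ⟨rfl, rfl⟩ := F_inj h2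
    rfl
  · rintro ⟨μ, hμ⟩
    obtain ⟨p, q, h⟩ := exists_F (μ.colLen 0) μ.rowLen (fun a b hab => μ.rowLen_anti a b hab)
      ((core_iff μ).1 hμ) (fun i hi => by
        have := rc μ i 0
        omega)
    refine ⟨(p, q), Subtype.ext (ext_rowLen ?_)⟩
    rw [h]; exact rowLen_D p q

def toZ (c : ℕ × ℕ) : ℤ × ℤ :=
  if (c.1 + c.2) % 3 = 0 then (((c.2 : ℤ) - 2 * c.1) / 3, ((c.1 : ℤ) + c.2) / 3)
  else if (c.1 + c.2) % 3 = 1 then (((c.1 : ℤ) - 2 * c.2 - 1) / 3, ((c.2 : ℤ) - 2 * c.1 - 1) / 3)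
  else (((c.1 : ℤ) + c.2 + 1) / 3, ((c.1 : ℤ) - 2 * c.2 - 2) / 3)

def ofZ (c : ℤ × ℤ) : ℕ × ℕ :=
  if c.1 ≤ c.2 ∧ 0 ≤ c.1 + 2 * c.2 then ((c.2 - c.1).toNat, (c.1 + 2 * c.2).toNat)
  else if 0 ≤ -c.1 - 2 * c.2 - 1 ∧ 0 ≤ - 2 * c.1 - c.2 - 1 then
    ((-c.1 - 2 * c.2 - 1).toNat, (- 2 * c.1 - c.2 - 1).toNat)
  else ((2 * c.1 + c.2).toNat, (c.1 - c.2 - 1).toNat)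

def eZ : ℤ × ℤ ≃ ℕ × ℕ where
  toFun := ofZ
  invFun := toZ
  left_inv := by
    rintro ⟨a, b⟩
    unfold ofZ
    split_ifs <;> unfold toZ <;> split_ifs <;> simp only [Prod.mk.injEq] at * <;> omega
  right_inv := by
    rintro ⟨p, q⟩
    unfold toZ
    split_ifs <;> unfold ofZ <;> split_ifs <;> simp only [Prod.mk.injEq] at * <;> omega

noncomputable def eCore : ℤ × ℤ ≃ Core := eZ.trans (Equiv.ofBijective toCore toCore_bij)

def Q (c : ℤ × ℤ) : ℤ := 3 * (c.1 ^ 2 + c.1 * c.2 + c.2 ^ 2) + c.1 + 2 * c.2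

lemma card_eCore (c : ℤ × ℤ) : ((eCore c).1.card : ℤ) = Q c := by
  show ((D (ofZ c).1 (ofZ c).2).card : ℤ) = _
  rw [card_D]
  obtain ⟨a, b⟩ := c
  unfold ofZ Q
  split_ifs with h1 h2
  · simp only at *
    rw [Int.toNat_of_nonneg (by omega), Int.toNat_of_nonneg (by omega)]; ring
  · simp only at *
    rw [Int.toNat_of_nonneg (by omega), Int.toNat_of_nonneg (by omega)]; ring
  · simp only at *
    rw [Int.toNat_of_nonneg (by omega), Int.toNat_of_nonneg (by omega)]; ring

abbrev V := (ℤ × ℤ) × (ℤ × ℤ) × (ℤ × ℤ)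

def S (n : ℤ) := {v : V // Q v.1 + Q v.2.1 + Q v.2.2 = n}

lemma B3_eq (n : ℕ) : B3 n = Nat.card (S n) := by
  unfold B3
  symm
  refine Nat.card_congr (Equiv.ofBijective (fun v => ⟨((eCore v.1.1).1, (eCore v.1.2.1).1,
    (eCore v.1.2.2).1), ?_, (eCore v.1.1).2, (eCore v.1.2.1).2, (eCore v.1.2.2).2⟩) ⟨?_, ?_⟩)
  · have := v.2
    rw [← card_eCore, ← card_eCore, ← card_eCore] at this
    exact_mod_cast this
  · rintro ⟨⟨a, b, c⟩, h⟩ ⟨⟨a', b', c'⟩, h'⟩ he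
    simp only [Subtype.mk.injEq, Prod.mk.injEq] at he
    obtain ⟨h1, h2, h3⟩ := he
    have h1 := eCore.injective (Subtype.ext h1)
    have h2 := eCore.injective (Subtype.ext h2)
    have h3 := eCore.injective (Subtype.ext h3)
    subst h1 h2 h3
    rfl
  · rintro ⟨⟨a, b, c⟩, h, ha, hb, hc⟩
    obtain ⟨a', ha'⟩ := eCore.surjective ⟨a, ha⟩
    obtain ⟨b', hb'⟩ := eCore.surjective ⟨b, hb⟩
    obtain ⟨c', hc'⟩ := eCore.surjective ⟨c, hc⟩
    refine ⟨⟨(a', b', c'), ?_⟩, ?_⟩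
    · simp only
      rw [← card_eCore, ← card_eCore, ← card_eCore, ha', hb', hc']
      exact_mod_cast h
    · simp only [ha', hb', hc']

def base (j : Fin 3) (v : V) : V :=
  match j, v with
  | 0, ((a1, b1), (a2, b2), (a3, b3)) => ((-b1 - a2 - b2 - a3 - b3 - 1, a1 + b1 + a2 + a3),
      (-b1 + b2 + a3, a1 + b1 - a2 - b2 + b3), (-b1 + a2 + b3, a1 + b1 + b2 - a3 - b3))
  | 1, ((a1, b1), (a2, b2), (a3, b3)) => ((-a1 + a2 + a3, -b1 + b2 + b3),
      (-a1 - a2 - b2 + b3, -b1 + a2 - a3 - b3 - 1), (-a1 + b2 - a3 - b3, -b1 - a2 - b2 + a3 - 1))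
  | 2, ((a1, b1), (a2, b2), (a3, b3)) => ((a1 + b1 + b2 + b3 + 1, -a1 - a2 - b2 - a3 - b3 - 1),
      (a1 + b1 + a2 - a3 - b3, -a1 + b2 + a3), (a1 + b1 - a2 - b2 + a3, -a1 + a2 + b3))

def shift (i : Fin 3) (v : V) : V :=
  match i, v with
  | 0, (x, y, z) => (x, y, z)
  | 1, (x, y, z) => (y, z, x)
  | 2, (x, y, z) => (z, x, y)

def QQ (v : V) : ℤ := Q v.1 + Q v.2.1 + Q v.2.2

def l1 (v : V) : ℤ := v.2.1.1 - v.2.1.2 - v.2.2.1 + v.2.2.2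
def l2 (v : V) : ℤ := v.1.2 + v.2.1.2 + v.2.2.2

lemma QQ_base (j : Fin 3) (v : V) : QQ (base j v) = 3 * QQ v + 2 := by
  obtain ⟨⟨a1, b1⟩, ⟨a2, b2⟩, ⟨a3, b3⟩⟩ := v
  fin_cases j <;> simp only [base, QQ, Q] <;> ring

lemma QQ_shift (i : Fin 3) (v : V) : QQ (shift i v) = QQ v := by
  obtain ⟨x, y, z⟩ := v
  fin_cases i <;> simp only [shift, QQ] <;> ring

def inv (j : Fin 3) (w : V) : V :=
  match j, w with
  | 0, ((c1, d1), (c2, d2), (c3, d3)) =>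
    (((c1 + d1 + c2 + d2 + c3 + d3 + 1) / 3, (-c1 - c2 - c3 - 1) / 3),
      ((d1 - c2 - d2 + c3) / 3, (-c1 - d1 + c2 + d3 - 1) / 3),
      ((d1 + c2 - c3 - d3) / 3, (-c1 - d1 + d2 + c3 - 1) / 3))
  | 1, ((c1, d1), (c2, d2), (c3, d3)) =>
    (((-c1 - c2 - c3) / 3, (-d1 - d2 - d3 - 2) / 3),
      ((c1 + d2 - c3 - d3) / 3, (d1 - c2 - d2 + c3 - 1) / 3),
      ((c1 - c2 - d2 + d3) / 3, (d1 + c2 - c3 - d3 - 1) / 3))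
  | 2, ((c1, d1), (c2, d2), (c3, d3)) =>
    (((-d1 - d2 - d3 - 1) / 3, (c1 + d1 + c2 + d2 + c3 + d3) / 3),
      ((-c1 - d1 + c2 + d3) / 3, (c1 + d2 - c3 - d3 - 1) / 3),
      ((-c1 - d1 + d2 + c3) / 3, (c1 - c2 - d2 + d3 - 1) / 3))

lemma inv_base (j : Fin 3) (v : V) : inv j (base j v) = v := by
  obtain ⟨⟨a1, b1⟩, ⟨a2, b2⟩, ⟨a3, b3⟩⟩ := v
  fin_cases j <;> simp only [base, inv, Prod.mk.injEq] <;>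
    refine ⟨⟨?_, ?_⟩, ⟨?_, ?_⟩, ?_, ?_⟩ <;> omega

lemma lin_of_QQ {w : V} (h : QQ w % 3 = 2) :
    (w.1.1 + 2 * w.1.2 + w.2.1.1 + 2 * w.2.1.2 + w.2.2.1 + 2 * w.2.2.2) % 3 = 2 := by
  have : QQ w = 3 * ((w.1.1 ^ 2 + w.1.1 * w.1.2 + w.1.2 ^ 2) +
    (w.2.1.1 ^ 2 + w.2.1.1 * w.2.1.2 + w.2.1.2 ^ 2) +
    (w.2.2.1 ^ 2 + w.2.2.1 * w.2.2.2 + w.2.2.2 ^ 2)) +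
    (w.1.1 + 2 * w.1.2 + w.2.1.1 + 2 * w.2.1.2 + w.2.2.1 + 2 * w.2.2.2) := by
    unfold QQ Q; ring
  omega

lemma base_inv (j : Fin 3) (w : V) (h : QQ w % 3 = 2) (h1 : l1 w % 3 = 0)
    (h2 : l2 w % 3 = j.val) : base j (inv j w) = w := by
  have h := lin_of_QQ h
  obtain ⟨⟨a1, b1⟩, ⟨a2, b2⟩, ⟨a3, b3⟩⟩ := w
  simp only [l1, l2] at h h1 h2
  fin_cases j <;> simp only [base, inv, Prod.mk.injEq] at h2 ⊢ <;>
    refine ⟨⟨?_, ?_⟩, ⟨?_, ?_⟩, ?_, ?_⟩ <;> omega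

lemma l2_fwd (i j : Fin 3) (v : V) : l2 (shift i (base j v)) % 3 = j.val := by
  obtain ⟨⟨a1, b1⟩, ⟨a2, b2⟩, ⟨a3, b3⟩⟩ := v
  fin_cases j <;> fin_cases i <;> simp only [base, shift, l2] <;> omega

lemma l1_fwd (i j : Fin 3) (v : V) : l1 (shift i (base j v)) % 3 = i.val := by
  obtain ⟨⟨a1, b1⟩, ⟨a2, b2⟩, ⟨a3, b3⟩⟩ := v
  fin_cases j <;> fin_cases i <;> simp only [base, shift, l1] <;> omega

lemma shift_inj (i : Fin 3) {v w : V} (h : shift i v = shift i w) : v = w := by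
  obtain ⟨x, y, z⟩ := v
  obtain ⟨x', y', z'⟩ := w
  fin_cases i <;> simp only [shift, Prod.mk.injEq] at h ⊢ <;> tauto

lemma exists_shift (w : V) (h : QQ w % 3 = 2) : ∃ i v, shift i v = w ∧ l1 v % 3 = 0 := by
  have h := lin_of_QQ h
  obtain ⟨⟨a1, b1⟩, ⟨a2, b2⟩, ⟨a3, b3⟩⟩ := w
  simp only at h
  have : (a2 - b2 - a3 + b3) % 3 = 0 ∨ (a2 - b2 - a3 + b3) % 3 = 1 ∨
    (a2 - b2 - a3 + b3) % 3 = 2 := by omega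
  rcases this with h' | h' | h'
  · exact ⟨0, ((a1, b1), (a2, b2), (a3, b3)), rfl, h'⟩
  · exact ⟨1, ((a3, b3), (a1, b1), (a2, b2)), rfl, by simp only [l1]; omega⟩
  · exact ⟨2, ((a2, b2), (a3, b3), (a1, b1)), rfl, by simp only [l1]; omega⟩

def fwd (n : ℤ) (c : (Fin 3 × Fin 3) × S n) : S (3 * n + 2) :=
  ⟨shift c.1.1 (base c.1.2 c.2.1), by
    have h : QQ c.2.1 = n := c.2.2
    show QQ _ = _
    rw [QQ_shift, QQ_base, h]⟩

lemma fwd_bij (n : ℤ) : Function.Bijective (fwd n) := by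
  constructor
  · rintro ⟨⟨i, j⟩, v, hv⟩ ⟨⟨i', j'⟩, v', hv'⟩ h
    have h : shift i (base j v) = shift i' (base j' v') := congrArg Subtype.val h
    have hi : i = i' := by
      have h1 := l1_fwd i j v
      rw [h, l1_fwd] at h1
      exact Fin.ext (by omega)
    have hj : j = j' := by
      have h1 := l2_fwd i j v
      rw [h, l2_fwd] at h1
      exact Fin.ext (by omega)
    subst hi hj
    have h := congrArg (inv j) (shift_inj i h)
    rw [inv_base, inv_base] at h
    subst h
    rfl
  · rintro ⟨w, hw⟩
    have hw : QQ w = 3 * n + 2 := hw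
    obtain ⟨i, u, hu, hl⟩ := exists_shift w (by omega)
    have hQ : QQ u = 3 * n + 2 := by rw [← hw, ← hu, QQ_shift]
    obtain ⟨j, hj⟩ : ∃ j : Fin 3, l2 u % 3 = j.val :=
      ⟨⟨(l2 u % 3).toNat, by omega⟩, by simp only; omega⟩
    have hb := base_inv j u (by omega) hl hj
    have hn : QQ (inv j u) = n := by
      have := QQ_base j (inv j u)
      rw [hb] at this
      omega
    refine ⟨((i, j), ⟨inv j u, hn⟩), Subtype.ext ?_⟩
    show shift i (base j (inv j u)) = w
    rw [hb, hu]

lemma B3_three (n : ℕ) : B3 (3 * n + 2) = 9 * B3 n := by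
  rw [B3_eq, B3_eq]
  push_cast
  rw [← Nat.card_congr (Equiv.ofBijective _ (fwd_bij n)), Nat.card_prod]
  simp

end ThreeCore

/-- For all k, n ≥ 0: B₃(3ᵏn + 3ᵏ − 1) = 3²ᵏ·B₃(n). -/
theorem B3_three_pow (k n : ℕ) :
    B3 (3 ^ k * n + 3 ^ k - 1) = 3 ^ (2 * k) * B3 n := by
  induction k with
  | zero => simp
  | succ k ih =>
    have hp : 0 < 3 ^ k := by positivity
    have : 3 ^ (k + 1) * n + 3 ^ (k + 1) - 1 = 3 * (3 ^ k * n + 3 ^ k - 1) + 2 := by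
      rw [pow_succ, mul_right_comm]
      omega
    rw [this, ThreeCore.B3_three, ih]
    ring
end

section
/- Let p be a prime with p ≡ 1 (mod 3), and let k, n be nonnegative integers such that p does not divide n+1. Then (p² − 1)·B_3(p^k·n + p^k − 1) = (p^{2(k+1)} − 1)·B_3(n). -/
/-- positive quadruples with `a x + b y = N` -/
def QQ (N : ℕ) : Finset (ℕ × ℕ × ℕ × ℕ) :=
  (Finset.range (N+1) ×ˢ Finset.range (N+1) ×ˢ Finset.range (N+1) ×ˢ Finset.range (N+1)).filter
    (fun q => 0 < q.1 ∧ 0 < q.2.1 ∧ 0 < q.2.2.1 ∧ 0 < q.2.2.2 ∧ q.1 * q.2.2.1 + q.2.1 * q.2.2.2 = N)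

lemma mem_QQ {N a b x y : ℕ} : (a, b, x, y) ∈ QQ N ↔
    0 < a ∧ 0 < b ∧ 0 < x ∧ 0 < y ∧ a * x + b * y = N := by
  simp only [QQ, Finset.mem_filter, Finset.mem_product, Finset.mem_range]
  constructor
  · exact fun h => h.2
  · intro h
    refine ⟨?_, h⟩
    obtain ⟨h1, h2, h3, h4, h5⟩ := h
    have := Nat.le_mul_of_pos_right a h3
    have := Nat.le_mul_of_pos_left x h1
    have := Nat.le_mul_of_pos_right b h4
    have := Nat.le_mul_of_pos_left y h2
    omega

def SS (N : ℕ) (g : ℕ → ℕ → ℕ → ℕ → ℤ) : ℤ :=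
  ∑ q ∈ QQ N, g q.1 q.2.1 q.2.2.1 q.2.2.2

lemma SS_congr {N : ℕ} {g h : ℕ → ℕ → ℕ → ℕ → ℤ}
    (H : ∀ a b x y, 0 < a → 0 < b → 0 < x → 0 < y → a * x + b * y = N → g a b x y = h a b x y) :
    SS N g = SS N h := by
  apply Finset.sum_congr rfl
  rintro ⟨a, b, x, y⟩ hq
  obtain ⟨h1, h2, h3, h4, h5⟩ := mem_QQ.1 hq
  exact H a b x y h1 h2 h3 h4 h5

lemma SS_add (N : ℕ) (g h : ℕ → ℕ → ℕ → ℕ → ℤ) :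
    SS N (fun a b x y => g a b x y + h a b x y) = SS N g + SS N h := Finset.sum_add_distrib

lemma SS_sub (N : ℕ) (g h : ℕ → ℕ → ℕ → ℕ → ℤ) :
    SS N (fun a b x y => g a b x y - h a b x y) = SS N g - SS N h := Finset.sum_sub_distrib _ _

lemma SS_swap (N : ℕ) (g : ℕ → ℕ → ℕ → ℕ → ℤ) :
    SS N g = SS N (fun a b x y => g b a y x) := by
  refine Finset.sum_bij' (fun q _ => (q.2.1, q.1, q.2.2.2, q.2.2.1))
    (fun q _ => (q.2.1, q.1, q.2.2.2, q.2.2.1)) ?_ ?_ ?_ ?_ ?_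
  · rintro ⟨a, b, x, y⟩ hq
    simp only [mem_QQ] at hq ⊢
    rw [add_comm (b * y)]; tauto
  · rintro ⟨a, b, x, y⟩ hq
    simp only [mem_QQ] at hq ⊢
    rw [add_comm (b * y)]; tauto
  all_goals rintro ⟨a, b, x, y⟩ hq; rfl

lemma SS_tr1 (N : ℕ) (g : ℕ → ℕ → ℕ → ℕ → ℤ) :
    SS N g = SS N (fun a b x y => g x b a y) := by
  refine Finset.sum_bij' (fun q _ => (q.2.2.1, q.2.1, q.1, q.2.2.2))
    (fun q _ => (q.2.2.1, q.2.1, q.1, q.2.2.2)) ?_ ?_ ?_ ?_ ?_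
  · rintro ⟨a, b, x, y⟩ hq
    simp only [mem_QQ] at hq ⊢
    rw [mul_comm x a]; tauto
  · rintro ⟨a, b, x, y⟩ hq
    simp only [mem_QQ] at hq ⊢
    rw [mul_comm x a]; tauto
  all_goals rintro ⟨a, b, x, y⟩ hq; rfl

lemma SS_tr2 (N : ℕ) (g : ℕ → ℕ → ℕ → ℕ → ℤ) :
    SS N g = SS N (fun a b x y => g a y x b) := by
  rw [SS_swap, SS_tr1, SS_swap]

/-- the anti-transposition -/
lemma SS_st (N : ℕ) (g : ℕ → ℕ → ℕ → ℕ → ℤ) :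
    SS N g = SS N (fun a b x y => g y x b a) := by
  rw [SS_swap, SS_tr1, SS_tr2]

lemma SS_T1 (N : ℕ) (g : ℕ → ℕ → ℕ → ℕ → ℤ) :
    SS N (fun a b x y => if b < a then g a b x y else 0) =
    SS N (fun a b x y => if x < y then g (a + b) b x (y - x) else 0) := by
  unfold SS
  rw [← Finset.sum_filter, ← Finset.sum_filter]
  refine Finset.sum_bij' (fun q _ => (q.1 - q.2.1, q.2.1, q.2.2.1, q.2.2.1 + q.2.2.2))
    (fun q _ => (q.1 + q.2.1, q.2.1, q.2.2.1, q.2.2.2 - q.2.2.1)) ?_ ?_ ?_ ?_ ?_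
  · rintro ⟨a, b, x, y⟩ hq
    simp only [Finset.mem_filter, mem_QQ] at hq ⊢
    obtain ⟨⟨h1, h2, h3, h4, h5⟩, h6⟩ := hq
    obtain ⟨c, rfl⟩ := Nat.exists_eq_add_of_lt h6
    refine ⟨⟨by omega, h2, h3, by omega, ?_⟩, by omega⟩
    rw [← h5, show b + c + 1 - b = c + 1 by omega]; ring
  · rintro ⟨a, b, x, y⟩ hq
    simp only [Finset.mem_filter, mem_QQ] at hq ⊢
    obtain ⟨⟨h1, h2, h3, h4, h5⟩, h6⟩ := hq
    obtain ⟨c, rfl⟩ := Nat.exists_eq_add_of_lt h6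
    refine ⟨⟨by omega, h2, h3, by omega, ?_⟩, by omega⟩
    rw [← h5, show x + c + 1 - x = c + 1 by omega]; ring
  · rintro ⟨a, b, x, y⟩ hq
    rw [Finset.mem_filter, mem_QQ] at hq
    simp only [Prod.mk.injEq, true_and]; simp only at hq; omega
  · rintro ⟨a, b, x, y⟩ hq
    rw [Finset.mem_filter, mem_QQ] at hq
    simp only [Prod.mk.injEq, true_and]; simp only at hq; omega
  · rintro ⟨a, b, x, y⟩ hq
    rw [Finset.mem_filter, mem_QQ] at hq
    simp only at hq ⊢
    congr 1 <;> omega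

lemma SS_T2 (N : ℕ) (g : ℕ → ℕ → ℕ → ℕ → ℤ) :
    SS N (fun a b x y => if a < b then g a b x y else 0) =
    SS N (fun a b x y => if y < x then g a (a + b) (x - y) y else 0) := by
  rw [SS_swap, SS_T1 N (fun a b x y => g b a y x), SS_swap]
  apply SS_congr
  intro a b x y _ _ _ _ _
  simp only [add_comm]

/-- `t` times the character mod 3 -/
def XX (a : ℕ) (t : ℤ) : ℤ := if a % 3 = 1 then t else if a % 3 = 2 then -t else 0


/-- case splitting -/
lemma SS_split_ab (N : ℕ) (g : ℕ → ℕ → ℕ → ℕ → ℤ) :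
    SS N g = SS N (fun a b x y => if b < a then g a b x y else 0) +
      SS N (fun a b x y => if a < b then g a b x y else 0) +
      SS N (fun a b x y => if a = b then g a b x y else 0) := by
  rw [← SS_add, ← SS_add]
  apply SS_congr
  intro a b x y _ _ _ _ _
  rcases lt_trichotomy a b with h | h | h
  · simp [h, h.ne, h.not_gt]
  · simp [h]
  · simp [h, h.ne', h.not_gt]

lemma SS_split_xy (N : ℕ) (g : ℕ → ℕ → ℕ → ℕ → ℤ) :
    SS N g = SS N (fun a b x y => if x < y then g a b x y else 0) +
      SS N (fun a b x y => if y < x then g a b x y else 0) +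
      SS N (fun a b x y => if x = y then g a b x y else 0) := by
  rw [← SS_add, ← SS_add]
  apply SS_congr
  intro a b x y _ _ _ _ _
  rcases lt_trichotomy x y with h | h | h
  · simp [h, h.ne, h.not_gt]
  · simp [h]
  · simp [h, h.ne', h.not_gt]

lemma SS_zero {N : ℕ} {g : ℕ → ℕ → ℕ → ℕ → ℤ}
    (H : ∀ a b x y, 0 < a → 0 < b → 0 < x → 0 < y → g a b x y = 0) : SS N g = 0 := by
  apply Finset.sum_eq_zero
  rintro ⟨a, b, x, y⟩ hq
  obtain ⟨h1, h2, h3, h4, h5⟩ := mem_QQ.1 hq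
  exact H a b x y h1 h2 h3 h4

def fS1 (a b x y : ℕ) : ℤ := if a % 3 ≠ 0 ∧ a % 3 = b % 3 ∧ a % 3 = x % 3 ∧ a % 3 = y % 3 then 1 else 0
def fS2 (a b x y : ℕ) : ℤ := if a % 3 ≠ 0 ∧ a % 3 = x % 3 ∧ b % 3 = y % 3 ∧ (a + b) % 3 = 0 then 1 else 0
def fU (a b x y : ℕ) : ℤ := if a % 3 = 0 ∧ b % 3 ≠ 0 ∧ b % 3 = x % 3 ∧ (x + y) % 3 = 0 then 1 else 0
def fK (a b x y : ℕ) : ℤ := if a % 3 = 0 ∧ b % 3 ≠ 0 ∧ x % 3 = y % 3 ∧ (x + b) % 3 = 0 then 1 else 0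

/-- First convolution: difference of the two classes is a diagonal. -/
lemma conv1 (N : ℕ) :
    SS N (fun a b x y => if a % 3 = x % 3 ∧ b % 3 = y % 3 then XX a (XX b 1) else 0) =
    SS N (fun a b x y => if a = b then fS1 a b x y else 0) := by
  have h0 : SS N (fun a b x y => if a % 3 = x % 3 ∧ b % 3 = y % 3 then XX a (XX b 1) else 0) =
      SS N fS1 - SS N fS2 := by
    rw [← SS_sub]
    apply SS_congr
    intro a b x y _ _ _ _ _
    simp only [XX, fS1, fS2]
    split_ifs <;> omega
  have h1 := SS_split_ab N fS1
  have h2 : SS N (fun a b x y => if a < b then fS1 a b x y else 0) =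
      SS N (fun a b x y => if b < a then fS1 a b x y else 0) := by
    rw [SS_swap]
    apply SS_congr
    intro a b x y _ _ _ _ _
    simp only [fS1]
    split_ifs <;> omega
  have h3 : SS N (fun a b x y => if b < a then fS1 a b x y else 0) =
      SS N (fun a b x y => if x < y then fU a b x y else 0) := by
    rw [SS_T1]
    apply SS_congr
    intro a b x y _ _ _ _ _
    simp only [fS1, fU]
    split_ifs <;> omega
  have h4 : SS N fU = SS N fK := by
    rw [SS_tr2]
    apply SS_congr
    intro a b x y _ _ _ _ _
    simp only [fK, fU]
    split_ifs <;> omega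
  have h5 := SS_split_ab N fK
  have h6 : SS N (fun a b x y => if a = b then fK a b x y else 0) = 0 := by
    apply SS_zero
    intro a b x y _ _ _ _
    simp only [fK]
    split_ifs <;> omega
  have h7 : SS N (fun a b x y => if b < a then fK a b x y else 0) =
      SS N (fun a b x y => if x < y then fS2 a b x y else 0) := by
    rw [SS_T1]
    apply SS_congr
    intro a b x y _ _ _ _ _
    simp only [fK, fS2]
    split_ifs <;> omega
  have h8 : SS N (fun a b x y => if a < b then fK a b x y else 0) =
      SS N (fun a b x y => if y < x then fU a b x y else 0) := by
    rw [SS_T2]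
    apply SS_congr
    intro a b x y _ _ _ _ _
    simp only [fK, fU]
    split_ifs <;> omega
  have h9 := SS_split_xy N fU
  have h10 : SS N (fun a b x y => if x = y then fU a b x y else 0) = 0 := by
    apply SS_zero
    intro a b x y _ _ _ _
    simp only [fU]
    split_ifs <;> omega
  have h11 := SS_split_xy N fS2
  have h12 : SS N (fun a b x y => if x = y then fS2 a b x y else 0) = 0 := by
    apply SS_zero
    intro a b x y _ _ _ _
    simp only [fS2]
    split_ifs <;> omega
  have h13 : SS N (fun a b x y => if y < x then fS2 a b x y else 0) =
      SS N (fun a b x y => if x < y then fS2 a b x y else 0) := by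
    rw [SS_swap]
    apply SS_congr
    intro a b x y _ _ _ _ _
    simp only [fS2]
    split_ifs <;> omega
  linarith

def gG (a b x y : ℕ) : ℤ := if a % 3 = b % 3 ∧ b % 3 = x % 3 ∧ (y + a) % 3 = 0 then XX b (b + x - a) else 0
def gA (a b x y : ℕ) : ℤ := if (a + b) % 3 = 0 ∧ b % 3 = x % 3 ∧ b % 3 = y % 3 then XX a a else 0
def gB (a b x y : ℕ) : ℤ := if (a + b) % 3 = 0 ∧ b % 3 = x % 3 ∧ b % 3 = y % 3 then XX b b else 0
def gK (a b x y : ℕ) : ℤ := if a % 3 = 0 ∧ b % 3 = x % 3 ∧ y % 3 = 0 then XX b a else 0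
def gK2 (a b x y : ℕ) : ℤ := if a % 3 = 0 ∧ b % 3 = x % 3 ∧ y % 3 = 0 then XX b x else 0
def gK3 (a b x y : ℕ) : ℤ := if a % 3 = 0 ∧ b % 3 = x % 3 ∧ y % 3 = 0 then XX b b else 0
def gJ (a b x y : ℕ) : ℤ := if b % 3 = 0 ∧ x % 3 = 0 ∧ (y + a) % 3 = 0 then XX a b else 0
def gJ2 (a b x y : ℕ) : ℤ := if b % 3 = 0 ∧ x % 3 = 0 ∧ (y + a) % 3 = 0 then XX a x else 0
def gJ3 (a b x y : ℕ) : ℤ := if b % 3 = 0 ∧ x % 3 = 0 ∧ (y + a) % 3 = 0 then XX a y else 0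
def gJ4 (a b x y : ℕ) : ℤ := if b % 3 = 0 ∧ x % 3 = 0 ∧ (y + a) % 3 = 0 then XX a a else 0

set_option maxHeartbeats 2000000 in
lemma conv2 (N : ℕ) :
    SS N (fun a b x y => -gA a b x y) +
    SS N (fun a b x y => if a % 3 = b % 3 ∧ b % 3 = x % 3 ∧ (y + a) % 3 = 0 then XX b b else 0) =
    SS N (fun a b x y => if a = b ∧ a % 3 = x % 3 ∧ (y + a) % 3 = 0 then XX a (x + y) else 0) := by
  have e1 : SS N (fun a b x y => if a % 3 = b % 3 ∧ b % 3 = x % 3 ∧ (y + a) % 3 = 0 then XX b b else 0)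
      = SS N (fun a b x y => if a % 3 = b % 3 ∧ b % 3 = x % 3 ∧ (y + a) % 3 = 0 then XX b (b + x - a) else 0) := by
    have h := SS_tr1 N (fun a b x y => if a % 3 = b % 3 ∧ b % 3 = x % 3 ∧ (y + a) % 3 = 0 then XX b a else 0)
    have h2 : SS N (fun a b x y => if a % 3 = b % 3 ∧ b % 3 = x % 3 ∧ (y + a) % 3 = 0 then XX b (b + x - a) else 0) =
       SS N (fun a b x y => if a % 3 = b % 3 ∧ b % 3 = x % 3 ∧ (y + a) % 3 = 0 then XX b b else 0) +
       SS N (fun a b x y => if x % 3 = b % 3 ∧ b % 3 = a % 3 ∧ (y + x) % 3 = 0 then XX b x else 0) -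
       SS N (fun a b x y => if a % 3 = b % 3 ∧ b % 3 = x % 3 ∧ (y + a) % 3 = 0 then XX b a else 0) := by
      rw [← SS_add, ← SS_sub]
      apply SS_congr
      intro a b x y _ _ _ _ _
      simp only [XX]
      split_ifs <;> omega
    linarith
  have e1' : SS N (fun a b x y => if a % 3 = b % 3 ∧ b % 3 = x % 3 ∧ (y + a) % 3 = 0 then XX b (b + x - a) else 0)
      = SS N gG := rfl
  rw [e1, e1']
  have e0 : SS N (fun a b x y => -gA a b x y) = - SS N gA := Finset.sum_neg_distrib _
  have e2 := SS_split_ab N gG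
  have e3 := SS_split_xy N gA
  have e4 : SS N (fun a b x y => if b < a then gG a b x y else 0) =
      SS N (fun a b x y => if x < y then gK2 a b x y else 0) - SS N (fun a b x y => if x < y then gK a b x y else 0) := by
    rw [SS_T1, ← SS_sub]
    apply SS_congr
    intro a b x y _ _ _ _ _
    simp only [XX, gG, gK, gK2]
    split_ifs <;> omega
  have e5 : SS N (fun a b x y => if a < b then gG a b x y else 0) =
      SS N (fun a b x y => if y < x then gJ a b x y else 0) + SS N (fun a b x y => if y < x then gJ2 a b x y else 0) - SS N (fun a b x y => if y < x then gJ3 a b x y else 0) := by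
    rw [SS_T2, ← SS_add, ← SS_sub]
    apply SS_congr
    intro a b x y _ _ _ _ _
    simp only [XX, gG, gJ, gJ2, gJ3]
    split_ifs <;> omega
  have e6 : SS N (fun a b x y => if x < y then gK2 a b x y else 0) =
      SS N (fun a b x y => if b < a then gK3 a b x y else 0) := by
    rw [SS_st]
    apply SS_congr
    intro a b x y _ _ _ _ _
    simp only [XX, gK2, gK3]
    split_ifs <;> omega
  have e7 : SS N (fun a b x y => if b < a then gK3 a b x y else 0) =
      SS N (fun a b x y => if x < y then gB a b x y else 0) := by
    rw [SS_T1]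
    apply SS_congr
    intro a b x y _ _ _ _ _
    simp only [XX, gK3, gB]
    split_ifs <;> omega
  have e8 := SS_split_ab N gK
  have e9 := SS_split_xy N gK
  have e10 : SS N (fun a b x y => if a = b then gK a b x y else 0) = 0 := by
    apply SS_zero
    intro a b x y _ _ _ _
    simp only [XX, gK]
    split_ifs <;> omega
  have e11 : SS N (fun a b x y => if x = y then gK a b x y else 0) = 0 := by
    apply SS_zero
    intro a b x y _ _ _ _
    simp only [XX, gK]
    split_ifs <;> omega
  have e12 : SS N (fun a b x y => if b < a then gK a b x y else 0) =
      SS N (fun a b x y => if x < y then gB a b x y else 0) - SS N (fun a b x y => if x < y then gA a b x y else 0) := by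
    rw [SS_T1, ← SS_sub]
    apply SS_congr
    intro a b x y _ _ _ _ _
    simp only [XX, gK, gA, gB]
    split_ifs <;> omega
  have e13 : SS N (fun a b x y => if a < b then gK a b x y else 0) =
      SS N (fun a b x y => if y < x then gK a b x y else 0) := by
    rw [SS_T2]
    apply SS_congr
    intro a b x y _ _ _ _ _
    simp only [XX, gK]
    split_ifs <;> omega
  have f8 := SS_split_ab N gJ
  have f9 := SS_split_xy N gJ
  have f10 : SS N (fun a b x y => if a = b then gJ a b x y else 0) = 0 := by
    apply SS_zero
    intro a b x y _ _ _ _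
    simp only [XX, gJ]
    split_ifs <;> omega
  have f11 : SS N (fun a b x y => if x = y then gJ a b x y else 0) = 0 := by
    apply SS_zero
    intro a b x y _ _ _ _
    simp only [XX, gJ]
    split_ifs <;> omega
  have f12 : SS N (fun a b x y => if b < a then gJ a b x y else 0) =
      SS N (fun a b x y => if x < y then gJ a b x y else 0) := by
    rw [SS_T1]
    apply SS_congr
    intro a b x y _ _ _ _ _
    simp only [XX, gJ]
    split_ifs <;> omega
  have f13 : SS N (fun a b x y => if y < x then gJ2 a b x y else 0) =
      SS N (fun a b x y => if a < b then -gJ a b x y else 0) := by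
    rw [SS_st]
    apply SS_congr
    intro a b x y _ _ _ _ _
    simp only [XX, gJ, gJ2]
    split_ifs <;> omega
  have f13' : SS N (fun a b x y => if a < b then -gJ a b x y else 0) =
      -SS N (fun a b x y => if a < b then gJ a b x y else 0) := by
    unfold SS
    rw [← Finset.sum_neg_distrib]
    apply Finset.sum_congr rfl
    intro q _
    dsimp only
    split_ifs <;> simp
  have f14 : SS N (fun a b x y => if y < x then gJ3 a b x y else 0) =
      SS N (fun a b x y => if a < b then -gJ4 a b x y else 0) := by
    rw [SS_st]
    apply SS_congr
    intro a b x y _ _ _ _ _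
    simp only [XX, gJ3, gJ4]
    split_ifs <;> omega
  have f14' : SS N (fun a b x y => if a < b then -gJ4 a b x y else 0) =
      -SS N (fun a b x y => if a < b then gJ4 a b x y else 0) := by
    unfold SS
    rw [← Finset.sum_neg_distrib]
    apply Finset.sum_congr rfl
    intro q _
    dsimp only
    split_ifs <;> simp
  have f15 : SS N (fun a b x y => if a < b then gJ4 a b x y else 0) =
      SS N (fun a b x y => if y < x then gA a b x y else 0) := by
    rw [SS_T2]
    apply SS_congr
    intro a b x y _ _ _ _ _
    simp only [XX, gA, gJ4]
    split_ifs <;> omega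
  have d1 : SS N (fun a b x y => if a = b ∧ a % 3 = x % 3 ∧ (y + a) % 3 = 0 then XX a (x + y) else 0) =
      SS N (fun a b x y => if a = b then gG a b x y else 0) - SS N (fun a b x y => if a = b then  (if a % 3 = x % 3 ∧ (y + a) % 3 = 0 then -XX a y else 0) else 0) := by
    rw [← SS_sub]
    apply SS_congr
    intro a b x y _ _ _ _ _
    simp only [XX, gG]
    split_ifs <;> omega
  have d2 : SS N (fun a b x y => if x = y then gA a b x y else 0) =
      SS N (fun a b x y => if a = b then  (if a % 3 = x % 3 ∧ (y + a) % 3 = 0 then -XX a y else 0) else 0) := by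
    rw [SS_st]
    apply SS_congr
    intro a b x y _ _ _ _ _
    simp only [XX, gA]
    split_ifs <;> omega
  linarith


def EE (n : ℕ) : ℤ := ∑ d ∈ n.divisors, XX d 1

def FF (n : ℕ) : ℤ := if n % 3 = 1 then EE n else 0

lemma sumD1 (f : ℕ → ℤ) {n : ℕ} : ∑ p ∈ n.divisorsAntidiagonal, f p.1 = ∑ d ∈ n.divisors, f d :=
  Nat.sum_divisorsAntidiagonal (fun a _ => f a)

lemma sumD2 (f : ℕ → ℤ) {n : ℕ} : ∑ p ∈ n.divisorsAntidiagonal, f p.2 = ∑ d ∈ n.divisors, f d :=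
  Nat.sum_divisorsAntidiagonal' (fun _ a => f a)

lemma SS_prod (N : ℕ) (f g : ℕ → ℕ → ℤ) :
    SS N (fun a b x y => f a x * g b y) = ∑ uv ∈ Finset.HasAntidiagonal.antidiagonal N,
      (∑ p ∈ uv.1.divisorsAntidiagonal, f p.1 p.2) * (∑ p ∈ uv.2.divisorsAntidiagonal, g p.1 p.2) := by
  unfold SS
  rw [← Finset.sum_fiberwise_of_maps_to (s := QQ N) (t := Finset.HasAntidiagonal.antidiagonal N)
    (g := fun q => (q.1 * q.2.2.1, q.2.1 * q.2.2.2))]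
  · apply Finset.sum_congr rfl
    rintro ⟨u, v⟩ huv
    rw [Finset.sum_mul_sum, ← Finset.sum_product']
    refine Finset.sum_bij' (fun q _ => ((q.1, q.2.2.1), (q.2.1, q.2.2.2)))
      (fun p _ => (p.1.1, p.2.1, p.1.2, p.2.2)) ?_ ?_ ?_ ?_ ?_
    · rintro ⟨a, b, x, y⟩ hq
      simp only [Finset.mem_filter, mem_QQ, Prod.mk.injEq] at hq
      simp only [Finset.mem_product, Nat.mem_divisorsAntidiagonal]
      obtain ⟨⟨h1, h2, h3, h4, h5⟩, h6, h7⟩ := hq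
      have := Nat.mul_pos h1 h3
      have := Nat.mul_pos h2 h4
      exact ⟨⟨h6, by omega⟩, h7, by omega⟩
    · rintro ⟨⟨a, x⟩, ⟨b, y⟩⟩ hq
      simp only [Finset.mem_product, Nat.mem_divisorsAntidiagonal] at hq
      simp only [Finset.mem_filter, mem_QQ, Prod.mk.injEq]
      obtain ⟨⟨h1, h2⟩, h3, h4⟩ := hq
      rw [Finset.HasAntidiagonal.mem_antidiagonal] at huv
      simp only at huv
      rw [← h1] at h2
      rw [← h3] at h4
      obtain ⟨i1, i2⟩ := mul_ne_zero_iff.1 h2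
      obtain ⟨i3, i4⟩ := mul_ne_zero_iff.1 h4
      refine ⟨⟨by omega, by omega, by omega, by omega, by omega⟩, h1, h3⟩
    all_goals (intros; rfl)
  · rintro ⟨a, b, x, y⟩ hq
    rw [mem_QQ] at hq
    simp only [Finset.HasAntidiagonal.mem_antidiagonal]
    exact hq.2.2.2.2

lemma SS_diag (N : ℕ) (g : ℕ → ℕ → ℕ → ℤ) :
    SS N (fun a b x y => if a = b then g a x y else 0) = ∑ p ∈ N.divisorsAntidiagonal,
      ∑ x ∈ Finset.Ioo 0 p.2, g p.1 x (p.2 - x) := by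
  unfold SS
  rw [← Finset.sum_filter, Finset.sum_sigma']
  refine Finset.sum_bij' (fun q _ => ⟨(q.1, q.2.2.1 + q.2.2.2), q.2.2.1⟩)
    (fun p _ => (p.1.1, p.1.1, p.2, p.1.2 - p.2)) ?_ ?_ ?_ ?_ ?_
  · rintro ⟨a, b, x, y⟩ hq
    simp only [Finset.mem_filter, mem_QQ] at hq
    obtain ⟨⟨h1, h2, h3, h4, h5⟩, rfl⟩ := hq
    simp only [Finset.mem_sigma, Nat.mem_divisorsAntidiagonal, Finset.mem_Ioo]
    have := Nat.mul_pos h1 h3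
    refine ⟨⟨by rw [← h5]; ring, by omega⟩, by omega, by omega⟩
  · rintro ⟨⟨a, e⟩, x⟩ hq
    simp only [Finset.mem_sigma, Nat.mem_divisorsAntidiagonal, Finset.mem_Ioo] at hq
    simp only [Finset.mem_filter, mem_QQ]
    obtain ⟨⟨h1, h2⟩, h3, h4⟩ := hq
    rw [← h1] at h2
    obtain ⟨i1, i2⟩ := mul_ne_zero_iff.1 h2
    refine ⟨⟨by omega, by omega, by omega, by omega, ?_⟩, trivial⟩
    rw [← mul_add, ← h1]; congr 1; omega
  · rintro ⟨a, b, x, y⟩ hq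
    simp only [Finset.mem_filter, mem_QQ] at hq
    obtain ⟨_, rfl⟩ := hq
    simp
  · rintro ⟨⟨a, e⟩, x⟩ hq
    simp only [Finset.mem_sigma, Nat.mem_divisorsAntidiagonal, Finset.mem_Ioo] at hq
    have : x + (e - x) = e := by omega
    simp [this]
  · rintro ⟨a, b, x, y⟩ hq
    simp

lemma FF_eq (v : ℕ) : (∑ p ∈ v.divisorsAntidiagonal,
    (if p.1 % 3 = p.2 % 3 then XX p.1 1 else 0)) = FF v := by
  unfold FF EE
  rw [← sumD1 (fun d => XX d 1)]
  split_ifs with h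
  · apply Finset.sum_congr rfl
    rintro ⟨b, y⟩ hp
    rw [Nat.mem_divisorsAntidiagonal] at hp
    simp only at hp ⊢
    have h1 := hp.1
    rw [← h1, Nat.mul_mod] at h
    have hb : b % 3 < 3 := Nat.mod_lt _ (by norm_num)
    have hy : y % 3 < 3 := Nat.mod_lt _ (by norm_num)
    unfold XX
    generalize b % 3 = r at *
    generalize y % 3 = s at *
    interval_cases r <;> interval_cases s <;> simp_all
  · apply Finset.sum_eq_zero
    rintro ⟨b, y⟩ hp
    rw [Nat.mem_divisorsAntidiagonal] at hp
    simp only at hp ⊢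
    have h1 := hp.1
    rw [← h1, Nat.mul_mod] at h
    have hb : b % 3 < 3 := Nat.mod_lt _ (by norm_num)
    have hy : y % 3 < 3 := Nat.mod_lt _ (by norm_num)
    unfold XX
    generalize b % 3 = r at *
    generalize y % 3 = s at *
    interval_cases r <;> interval_cases s <;> simp_all

lemma anti_three (m r : ℕ) (hr : r < 3) (H : ℕ × ℕ → ℤ) (hH : ∀ p, p.2 % 3 ≠ 1 → H p = 0) :
    ∑ p ∈ Finset.HasAntidiagonal.antidiagonal (3 * m + 1 + r), H p =
    ∑ p ∈ Finset.HasAntidiagonal.antidiagonal m, H (3 * p.1 + r, 3 * p.2 + 1) := by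
  symm
  have : ∑ p ∈ Finset.HasAntidiagonal.antidiagonal m, H (3 * p.1 + r, 3 * p.2 + 1) =
    ∑ p ∈ (Finset.HasAntidiagonal.antidiagonal m).image (fun p => (3 * p.1 + r, 3 * p.2 + 1)), H p := by
    rw [Finset.sum_image]
    rintro ⟨a, b⟩ _ ⟨c, d⟩ _ h
    simp only [Prod.mk.injEq] at h ⊢
    omega
  rw [this]
  apply Finset.sum_subset
  · rintro ⟨u, v⟩ h
    simp only [Finset.mem_image, Finset.HasAntidiagonal.mem_antidiagonal, Prod.mk.injEq, Prod.exists] at h ⊢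
    omega
  · rintro ⟨u, v⟩ h h2
    apply hH
    intro h3
    apply h2
    simp only [Finset.mem_image, Finset.HasAntidiagonal.mem_antidiagonal, Prod.mk.injEq, Prod.exists] at h h3 ⊢
    exact ⟨u / 3, v / 3, by omega⟩

lemma count0 (e r : ℕ) (hr : r = 1 ∨ r = 2) :
    ∑ x ∈ Finset.Ioo 0 e, (if x % 3 = r then (1:ℤ) else 0) = ((e + 2 - r) / 3 : ℕ) := by
  have h : ∑ x ∈ Finset.range e, (if x % 3 = r then (1:ℤ) else 0) = ((e + 2 - r) / 3 : ℕ) := by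
    induction e with
    | zero => rcases hr with rfl | rfl <;> simp
    | succ n ih =>
      rw [Finset.sum_range_succ, ih]
      split_ifs <;> omega
  rw [← h]
  apply Finset.sum_subset
  · intro x hx
    simp only [Finset.mem_Ioo, Finset.mem_range] at *
    omega
  · intro x hx hx2
    simp only [Finset.mem_Ioo, Finset.mem_range] at *
    rw [if_neg]; omega

/-- number of `x` in `(0,e)` with a given nonzero residue -/
lemma count1 (e a : ℕ) (ha : a % 3 = 1 ∨ a % 3 = 2) (he : (a + e) % 3 = 0) :
    3 * ∑ x ∈ Finset.Ioo 0 e, fS1 a a x (e - x) = e + XX a 1 := by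
  have : ∀ x ∈ Finset.Ioo 0 e, fS1 a a x (e - x) = if x % 3 = a % 3 then (1:ℤ) else 0 := by
    intro x hx
    rw [Finset.mem_Ioo] at hx
    unfold fS1
    split_ifs <;> omega
  rw [Finset.sum_congr rfl this, count0 e (a % 3) ha]
  unfold XX
  split_ifs <;> omega

lemma count2 (e a : ℕ) (he : e % 3 = 0) (ha : a % 3 = 1 ∨ a % 3 = 2) :
    3 * ∑ x ∈ Finset.Ioo 0 e, (if a % 3 = x % 3 ∧ (e - x + a) % 3 = 0 then (1:ℤ) else 0) = e := by
  have : ∀ x ∈ Finset.Ioo 0 e, (if a % 3 = x % 3 ∧ (e - x + a) % 3 = 0 then (1:ℤ) else 0)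
      = if x % 3 = a % 3 then (1:ℤ) else 0 := by
    intro x hx
    rw [Finset.mem_Ioo] at hx
    split_ifs <;> omega
  rw [Finset.sum_congr rfl this, count0 e (a % 3) ha]
  omega

lemma EE_two (n : ℕ) (h : n % 3 = 2) : EE n = 0 := by
  have h1 : EE n = ∑ p ∈ n.divisorsAntidiagonal, XX p.1 1 := by
    unfold EE; rw [← sumD1 (fun d => XX d 1)]
  have h2 : EE n = ∑ p ∈ n.divisorsAntidiagonal, XX p.2 1 := by
    unfold EE; rw [← sumD2 (fun d => XX d 1)]
  have h3 : ∑ p ∈ n.divisorsAntidiagonal, XX p.1 1 = ∑ p ∈ n.divisorsAntidiagonal, -XX p.2 1 := by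
    apply Finset.sum_congr rfl
    rintro ⟨b, y⟩ hp
    rw [Nat.mem_divisorsAntidiagonal] at hp
    simp only at hp ⊢
    have h1 := hp.1
    rw [← h1, Nat.mul_mod] at h
    have hb : b % 3 < 3 := Nat.mod_lt _ (by norm_num)
    have hy : y % 3 < 3 := Nat.mod_lt _ (by norm_num)
    unfold XX
    generalize b % 3 = r at *
    generalize y % 3 = s at *
    interval_cases r <;> interval_cases s <;> simp_all
  rw [Finset.sum_neg_distrib] at h3
  linarith

lemma conv1' (m : ℕ) : 3 * ∑ p ∈ Finset.HasAntidiagonal.antidiagonal m, EE (3 * p.1 + 1) * EE (3 * p.2 + 1) =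
    ∑ d ∈ (3 * m + 2).divisors, (d : ℤ) := by
  have h := conv1 (3 * m + 2)
  have e1 : SS (3 * m + 2) (fun a b x y => if a % 3 = x % 3 ∧ b % 3 = y % 3 then XX a (XX b 1) else 0)
    = SS (3 * m + 2) (fun a b x y => (if a % 3 = x % 3 then XX a 1 else 0) *
        (if b % 3 = y % 3 then XX b 1 else 0)) := by
    apply SS_congr
    intro a b x y _ _ _ _ _
    simp only [XX]
    split_ifs <;> first | omega | simp_all
  rw [e1, SS_prod _ (fun a x => if a % 3 = x % 3 then XX a 1 else 0)
    (fun a x => if a % 3 = x % 3 then XX a 1 else 0)] at h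
  simp only [FF_eq] at h
  rw [show 3 * m + 2 = 3 * m + 1 + 1 by ring, anti_three m 1 (by norm_num)
    (fun p => FF p.1 * FF p.2)] at h
  swap
  · intro p hp; simp [FF, hp]
  have e2 : ∀ p ∈ Finset.HasAntidiagonal.antidiagonal m, FF (3 * p.1 + 1) * FF (3 * p.2 + 1) =
      EE (3 * p.1 + 1) * EE (3 * p.2 + 1) := by
    intro p _
    unfold FF
    rw [if_pos (by omega), if_pos (by omega)]
  rw [Finset.sum_congr rfl e2] at h
  have e9 : SS (3 * m + 1 + 1) (fun a b x y => if a = b then fS1 a b x y else 0) =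
      SS (3 * m + 1 + 1) (fun a b x y => if a = b then fS1 a a x y else 0) := by
    apply SS_congr
    intro a b x y _ _ _ _ _
    split_ifs with h
    · rw [h]
    · rfl
  rw [h, e9, SS_diag _ (fun a x y => fS1 a a x y), Finset.mul_sum]
  have e3 : ∀ p ∈ (3 * m + 1 + 1).divisorsAntidiagonal,
      3 * ∑ x ∈ Finset.Ioo 0 p.2, fS1 p.1 p.1 x (p.2 - x) = p.2 + XX p.1 1 := by
    rintro ⟨a, e⟩ hp
    rw [Nat.mem_divisorsAntidiagonal] at hp
    have h0 : (3 * m + 1 + 1) % 3 = 2 := by omega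
    have h1 := hp.1
    simp only at h1 ⊢
    rw [← h1, Nat.mul_mod] at h0
    have : (a % 3 = 1 ∧ e % 3 = 2) ∨ (a % 3 = 2 ∧ e % 3 = 1) := by
      have hb : a % 3 < 3 := Nat.mod_lt _ (by norm_num)
      have hy : e % 3 < 3 := Nat.mod_lt _ (by norm_num)
      generalize a % 3 = r at *
      generalize e % 3 = s at *
      interval_cases r <;> interval_cases s <;> simp_all
    exact count1 e a (by omega) (by omega)
  rw [Finset.sum_congr rfl e3, Finset.sum_add_distrib]
  have e4 := EE_two (3 * m + 1 + 1) (by omega)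
  unfold EE at e4
  rw [← sumD1 (fun d => XX d 1)] at e4
  rw [e4, sumD2 (fun d => (d:ℤ)), add_zero]

/-- the divisor sum -/
def GG (n : ℕ) : ℤ := ∑ p ∈ n.divisorsAntidiagonal, XX p.1 1 * (p.2 : ℤ) ^ 2

lemma conv2' (m : ℕ) : ∑ p ∈ Finset.HasAntidiagonal.antidiagonal m,
    (∑ d ∈ (3 * p.1 + 2).divisors, (d : ℤ)) * EE (3 * p.2 + 1) = 3 * GG (m + 1) := by
  have h := conv2 (3 * m + 3)
  have e0 : SS (3 * m + 3) (fun a b x y => (a : ℤ) * (if b % 3 = y % 3 then XX b 1 else 0)) =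
     SS (3 * m + 3) (fun a b x y => - gA a b x y) +
     SS (3 * m + 3) (fun a b x y => if a % 3 = b % 3 ∧ b % 3 = y % 3 ∧ (x + a) % 3 = 0 then XX b a else 0) := by
    rw [← SS_add]
    apply SS_congr
    intro a b x y _ _ _ _ hN
    have h0 : (a * x + b * y) % 3 = 0 := by omega
    have ha := Nat.mod_lt a (show 3 > 0 by norm_num)
    have hb := Nat.mod_lt b (show 3 > 0 by norm_num)
    have hx := Nat.mod_lt x (show 3 > 0 by norm_num)
    have hy := Nat.mod_lt y (show 3 > 0 by norm_num)
    rw [Nat.add_mod, Nat.mul_mod a, Nat.mul_mod b] at h0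
    simp only [XX, gA, Nat.add_mod a, Nat.add_mod x]
    generalize a % 3 = r1 at *
    generalize b % 3 = r2 at *
    generalize x % 3 = r3 at *
    generalize y % 3 = r4 at *
    interval_cases r2 <;> interval_cases r4 <;> interval_cases r1 <;> interval_cases r3 <;> simp_all
  rw [SS_swap _ (fun a b x y => if a % 3 = b % 3 ∧ b % 3 = y % 3 ∧ (x + a) % 3 = 0 then XX b a else 0)] at e0
  have e0' : SS (3 * m + 3) (fun a b x y => if b % 3 = a % 3 ∧ a % 3 = x % 3 ∧ (y + b) % 3 = 0 then XX a b else 0)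
     = SS (3 * m + 3) (fun a b x y => if a % 3 = b % 3 ∧ b % 3 = x % 3 ∧ (y + a) % 3 = 0 then XX b b else 0) := by
    apply SS_congr
    intro a b x y _ _ _ _ hN
    simp only [XX]
    split_ifs <;> omega
  rw [e0', h] at e0
  rw [SS_prod _ (fun a x => (a:ℤ)) (fun a x => if a % 3 = x % 3 then XX a 1 else 0)] at e0
  simp only [FF_eq] at e0
  rw [show 3 * m + 3 = 3 * m + 1 + 2 by ring, anti_three m 2 (by norm_num)
    (fun p => (∑ q ∈ p.1.divisorsAntidiagonal, (q.1 : ℤ)) * FF p.2)] at e0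
  swap
  · intro p hp; simp [FF, hp]
  have e2 : ∀ p ∈ Finset.HasAntidiagonal.antidiagonal m,
      (∑ q ∈ (3 * p.1 + 2).divisorsAntidiagonal, (q.1 : ℤ)) * FF (3 * p.2 + 1) =
      (∑ d ∈ (3 * p.1 + 2).divisors, (d : ℤ)) * EE (3 * p.2 + 1) := by
    intro p _
    unfold FF
    rw [if_pos (by omega), sumD1 (fun d => (d:ℤ))]
  simp only at e0
  rw [Finset.sum_congr rfl e2] at e0
  rw [e0]
  have e5 : SS (3 * m + 1 + 2) (fun a b x y => if a = b ∧ a % 3 = x % 3 ∧ (y + a) % 3 = 0 then XX a (x + y) else 0)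
    = SS (3 * m + 1 + 2) (fun a b x y => if a = b then (if a % 3 = x % 3 ∧ (y + a) % 3 = 0 then XX a (x + y) else 0) else 0) := by
    apply SS_congr
    intro a b x y _ _ _ _ hN
    split_ifs <;> first | rfl | omega
  rw [e5, SS_diag _ (fun a x y => if a % 3 = x % 3 ∧ (y + a) % 3 = 0 then XX a (x + y) else 0)]
  have e6 : ∀ p ∈ (3 * m + 1 + 2).divisorsAntidiagonal,
     3 * ∑ x ∈ Finset.Ioo 0 p.2, (if p.1 % 3 = x % 3 ∧ (p.2 - x + p.1) % 3 = 0 then XX p.1 (x + (p.2 - x : ℕ)) else 0)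
      = if p.2 % 3 = 0 then XX p.1 1 * (p.2 : ℤ) ^ 2 else 0 := by
    rintro ⟨a, e⟩ hp
    simp only
    have e7 : ∀ x ∈ Finset.Ioo 0 e, (if a % 3 = x % 3 ∧ (e - x + a) % 3 = 0 then XX a (x + (e - x : ℕ)) else 0)
      = XX a 1 * e * (if a % 3 = x % 3 ∧ (e - x + a) % 3 = 0 then (1:ℤ) else 0) := by
      intro x hx
      rw [Finset.mem_Ioo] at hx
      have : (x:ℤ) + (e - x : ℕ) = e := by omega
      rw [this]
      unfold XX
      split_ifs <;> simp
    rw [Finset.sum_congr rfl e7, ← Finset.mul_sum]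
    by_cases h3 : a % 3 = 0
    · simp [XX, h3]
    split_ifs with he
    · have := count2 e a he (by omega)
      linear_combination (XX a 1 * e) * this
    · rw [Finset.sum_eq_zero]
      · simp
      · intro x hx
        rw [Finset.mem_Ioo] at hx
        rw [if_neg]
        omega
  suffices hh : 3 * ∑ p ∈ (3 * m + 1 + 2).divisorsAntidiagonal,
     ∑ x ∈ Finset.Ioo 0 p.2, (if p.1 % 3 = x % 3 ∧ (p.2 - x + p.1) % 3 = 0 then XX p.1 (x + (p.2 - x : ℕ)) else 0)
      = 9 * GG (m + 1) by linarith
  rw [Finset.mul_sum, Finset.sum_congr rfl e6, ← Finset.sum_filter]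
  unfold GG
  rw [Finset.mul_sum]
  refine Finset.sum_bij' (fun p _ => (p.1, p.2 / 3)) (fun p _ => (p.1, 3 * p.2)) ?_ ?_ ?_ ?_ ?_
  · rintro ⟨a, e⟩ h
    simp only [Finset.mem_filter, Nat.mem_divisorsAntidiagonal] at h ⊢
    obtain ⟨⟨h1, h2⟩, h3⟩ := h
    obtain ⟨f, rfl⟩ := Nat.dvd_of_mod_eq_zero h3
    rw [Nat.mul_div_cancel_left f (by norm_num)]
    refine ⟨?_, by omega⟩
    have : 3 * (a * f) = 3 * (m + 1) := by rw [← mul_left_comm]; omega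
    omega
  · rintro ⟨a, e⟩ h
    simp only [Finset.mem_filter, Nat.mem_divisorsAntidiagonal] at h ⊢
    refine ⟨⟨?_, by omega⟩, by omega⟩
    rw [mul_left_comm, h.1]; ring
  · rintro ⟨a, e⟩ h
    simp only [Finset.mem_filter] at h
    simp only [Prod.mk.injEq, true_and]; omega
  · rintro ⟨a, e⟩ h
    simp only [Prod.mk.injEq, true_and]; omega
  · rintro ⟨a, e⟩ h
    simp only [Finset.mem_filter] at h
    obtain ⟨f, rfl⟩ := Nat.dvd_of_mod_eq_zero h.2
    simp only
    rw [Nat.mul_div_cancel_left f (by norm_num)]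
    push_cast; ring


lemma XX_mul (a b : ℕ) : XX (a * b) 1 = XX a 1 * XX b 1 := by
  unfold XX
  rw [Nat.mul_mod]
  have ha := Nat.mod_lt a (show 3 > 0 by norm_num)
  have hb := Nat.mod_lt b (show 3 > 0 by norm_num)
  generalize a % 3 = r at *
  generalize b % 3 = s at *
  interval_cases r <;> interval_cases s <;> simp

lemma EE_rec (p m : ℕ) (hp : p.Prime) (hm : 0 < m) :
    EE (p * m) = (1 + XX p 1) * EE m - XX p 1 * (if p ∣ m then EE (m / p) else 0) := by
  have hp0 := hp.pos
  have hinj : ∀ s : Finset ℕ, Set.InjOn (fun d => p * d) s := by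
    intro s a _ b _ h
    exact Nat.eq_of_mul_eq_mul_left hp0 h
  have hsum : ∀ s : Finset ℕ, ∑ d ∈ s.image (fun d => p * d), XX d 1 = XX p 1 * ∑ d ∈ s, XX d 1 := by
    intro s
    rw [Finset.sum_image (hinj s), Finset.mul_sum]
    exact Finset.sum_congr rfl (fun d _ => XX_mul p d)
  have hU : (p * m).divisors = m.divisors ∪ m.divisors.image (fun d => p * d) := by
    ext d
    simp only [Finset.mem_union, Finset.mem_image, Nat.mem_divisors]
    constructor
    · rintro ⟨h1, h2⟩
      by_cases hd : p ∣ d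
      · obtain ⟨e, rfl⟩ := hd
        right
        exact ⟨e, ⟨Nat.dvd_of_mul_dvd_mul_left hp0 h1, hm.ne'⟩, rfl⟩
      · left
        have : Nat.Coprime d p := ((Nat.Prime.coprime_iff_not_dvd hp).2 hd).symm
        exact ⟨this.dvd_of_dvd_mul_left h1, hm.ne'⟩
    · rintro (⟨h1, h2⟩ | ⟨e, ⟨h1, h2⟩, rfl⟩)
      · exact ⟨h1.mul_left p, (Nat.mul_pos hp0 hm).ne'⟩
      · exact ⟨mul_dvd_mul_left p h1, (Nat.mul_pos hp0 hm).ne'⟩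
  have key := Finset.sum_union_inter (s₁ := m.divisors) (s₂ := m.divisors.image (fun d => p * d))
    (f := fun d => XX d 1)
  rw [← hU, hsum] at key
  have hI : ∑ d ∈ m.divisors ∩ m.divisors.image (fun d => p * d), XX d 1 =
      XX p 1 * (if p ∣ m then EE (m / p) else 0) := by
    split_ifs with h
    · obtain ⟨k, rfl⟩ := h
      rw [Nat.mul_div_cancel_left k hp0]
      unfold EE
      rw [← hsum]
      congr 1
      ext d
      simp only [Finset.mem_inter, Finset.mem_image, Nat.mem_divisors]
      constructor
      · rintro ⟨⟨h1, h2⟩, e, ⟨h3, _⟩, rfl⟩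
        exact ⟨e, ⟨Nat.dvd_of_mul_dvd_mul_left hp0 h1, by rintro rfl; simp at h2⟩, rfl⟩
      · rintro ⟨e, ⟨h1, h2⟩, rfl⟩
        exact ⟨⟨mul_dvd_mul_left p h1, hm.ne'⟩, e, ⟨h1.mul_left p, hm.ne'⟩, rfl⟩
    · rw [mul_zero]
      apply Finset.sum_eq_zero
      intro d hd
      simp only [Finset.mem_inter, Finset.mem_image, Nat.mem_divisors] at hd
      obtain ⟨⟨h1, h2⟩, e, ⟨h3, _⟩, rfl⟩ := hd
      exact absurd ((Dvd.intro e rfl).trans h1) h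
  rw [hI] at key
  unfold EE at *
  linarith

noncomputable def RR (n : ℕ) : Finset (ℤ × ℤ) :=
  (Finset.Icc (-(2 * n : ℤ)) (2 * n) ×ˢ Finset.Icc (-(2 * n : ℤ)) (2 * n)).filter
    (fun q => q.1 ^ 2 - q.1 * q.2 + q.2 ^ 2 = n)

lemma form_bound (x y : ℤ) (n : ℕ) (h : x ^ 2 - x * y + y ^ 2 = n) : -(2 * n : ℤ) ≤ x ∧ x ≤ 2 * n := by
  have h1 : x ^ 2 ≤ (2 * n : ℤ) ^ 2 := by
    rcases Nat.eq_zero_or_pos n with h0 | h0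
    · subst h0
      push_cast at h
      nlinarith [sq_nonneg (2 * y - x)]
    · have : (1:ℤ) ≤ n := by exact_mod_cast h0
      nlinarith [sq_nonneg (2 * y - x)]
  exact abs_le.1 (abs_le_of_sq_le_sq h1 (by positivity))

lemma mem_RR {n : ℕ} {x y : ℤ} : (x, y) ∈ RR n ↔ x ^ 2 - x * y + y ^ 2 = n := by
  simp only [RR, Finset.mem_filter, Finset.mem_product, Finset.mem_Icc]
  constructor
  · exact fun h => h.2
  · intro h
    exact ⟨⟨form_bound x y n h, form_bound y x n (by linarith)⟩, h⟩

lemma card_scale (p m : ℕ) (hp : p.Prime) (S : Finset (ℤ × ℤ))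
    (hS : ∀ z, z ∈ S ↔ z ∈ RR (p * m) ∧ (p:ℤ) ∣ z.1 ∧ (p:ℤ) ∣ z.2) :
    S.card = if p ∣ m then (RR (m / p)).card else 0 := by
  have hp0 := hp.pos
  have hpz : (p:ℤ) ≠ 0 := by exact_mod_cast hp0.ne'
  split_ifs with h
  · obtain ⟨k, rfl⟩ := h
    rw [Nat.mul_div_cancel_left k hp0]
    have : S = (RR k).image (fun z => ((p:ℤ) * z.1, (p:ℤ) * z.2)) := by
      ext ⟨x, y⟩
      rw [hS]
      simp only [Finset.mem_image, mem_RR, Prod.mk.injEq, Prod.exists]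
      constructor
      · rintro ⟨h1, ⟨u, rfl⟩, ⟨v, rfl⟩⟩
        refine ⟨u, v, ?_, rfl, rfl⟩
        have : (p:ℤ) ^ 2 * (u ^ 2 - u * v + v ^ 2) = p ^ 2 * k := by
          push_cast at h1; linarith
        exact mul_left_cancel₀ (pow_ne_zero 2 hpz) this
      · rintro ⟨u, v, h1, rfl, rfl⟩
        refine ⟨?_, Dvd.intro _ rfl, Dvd.intro _ rfl⟩
        push_cast
        rw [← h1]; ring
    rw [this, Finset.card_image_of_injective]
    rintro ⟨a, b⟩ ⟨c, d⟩ h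
    simp only [Prod.mk.injEq] at h ⊢
    exact ⟨mul_left_cancel₀ hpz h.1, mul_left_cancel₀ hpz h.2⟩
  · rw [Finset.card_eq_zero, Finset.eq_empty_iff_forall_notMem]
    rintro ⟨x, y⟩ hz
    rw [hS, mem_RR] at hz
    obtain ⟨h1, ⟨u, h2⟩, ⟨v, h3⟩⟩ := hz
    simp only at h2 h3
    subst h2 h3
    apply h
    have : (p:ℤ) * m = p * (p * (u ^ 2 - u * v + v ^ 2)) := by push_cast at h1; linarith
    have := mul_left_cancel₀ hpz this
    exact_mod_cast Dvd.intro _ this.symm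

lemma RR_inert (p m : ℕ) (hp : p.Prime) (h3 : p % 3 = 2) :
    (RR (p * m)).card = if p ∣ m then (RR (m / p)).card else 0 := by
  apply card_scale p m hp
  rintro ⟨x, y⟩
  constructor
  swap
  · exact fun h => h.1
  intro h
  refine ⟨h, ?_⟩
  rw [mem_RR] at h
  have := Fact.mk hp
  simp only [← ZMod.intCast_zmod_eq_zero_iff_dvd]
  have hz : (x : ZMod p) ^ 2 - x * y + (y : ZMod p) ^ 2 = 0 := by
    have := congrArg (Int.cast : ℤ → ZMod p) h
    push_cast at this
    simpa using this
  generalize (x : ZMod p) = X at *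
  generalize (y : ZMod p) = Y at *
  have hc : X ^ 3 = (-Y) ^ 3 := by linear_combination (X + Y) * hz
  obtain ⟨k, hk⟩ : ∃ k, 2 * p = 3 * (2 * k + 1) + 1 := ⟨p / 3, by omega⟩
  have hpow : ∀ t : ZMod p, (t ^ 3) ^ (2 * k + 1) = t := by
    intro t
    rw [← pow_mul]
    rcases eq_or_ne t 0 with rfl | ht
    · simp
    · have : t ^ (3 * (2 * k + 1)) * t = t * t := by
        rw [← pow_succ, ← hk, mul_comm, pow_mul, ZMod.pow_card, pow_two]
      exact mul_right_cancel₀ ht this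
  have hxy : X = -Y := by rw [← hpow X, hc, hpow]
  have h3' : (3 : ZMod p) ≠ 0 := by
    intro h
    have : ((3 : ℕ) : ZMod p) = 0 := by exact_mod_cast h
    rw [ZMod.natCast_eq_zero_iff] at this
    have := (Nat.prime_dvd_prime_iff_eq hp Nat.prime_three).1 this
    omega
  have hy : Y = 0 := by
    have : 3 * Y ^ 2 = 0 := by rw [hxy] at hz; linear_combination hz
    simpa [h3'] using this
  exact ⟨by rw [hxy, hy, neg_zero], hy⟩

/-- primes `1 mod 3` are norms -/
lemma exists_form (p : ℕ) (hp : p.Prime) (h3 : p % 3 = 1) :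
    ∃ c d : ℤ, c ^ 2 - c * d + d ^ 2 = p := by
  have := Fact.mk hp
  obtain ⟨t, ht⟩ : ∃ t : ZMod p, t ^ 2 - t + 1 = 0 := by
    have hcard : Fintype.card (ZMod p)ˣ = p - 1 := ZMod.card_units p
    obtain ⟨g, hg⟩ := exists_prime_orderOf_dvd_card (G := (ZMod p)ˣ) 3 (by rw [hcard]; omega)
    have hg3 : (g : ZMod p) ^ 3 = 1 := by
      rw [← Units.val_pow_eq_pow_val, ← hg, pow_orderOf_eq_one]; rfl
    have hg1 : (g : ZMod p) ≠ 1 := by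
      intro h
      have : g = 1 := Units.ext h
      rw [this, orderOf_one] at hg
      omega
    refine ⟨-g, ?_⟩
    have : ((g : ZMod p) - 1) * ((-(g : ZMod p)) ^ 2 - (-(g : ZMod p)) + 1) = 0 := by
      linear_combination hg3
    exact (mul_eq_zero.1 this).resolve_left (sub_ne_zero.2 hg1)
  set s := Nat.sqrt p
  have hs1 : p < (s + 1) * (s + 1) := Nat.lt_succ_sqrt p
  have hs2 : s * s < p := by
    rcases (Nat.sqrt_le p).lt_or_eq with h | h
    · exact h
    · exfalso
      have : ¬ p.Prime := by
        rw [← h]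
        apply Nat.not_prime_mul
        · intro h1; rw [h1] at h; have := hp.one_lt; omega
        · intro h1; rw [h1] at h; have := hp.one_lt; omega
      exact this hp
  obtain ⟨⟨u, v⟩, hu, ⟨u', v'⟩, hv, hne, heq⟩ := Finset.exists_ne_map_eq_of_card_lt_of_maps_to
    (s := Finset.range (s + 1) ×ˢ Finset.range (s + 1)) (t := (Finset.univ : Finset (ZMod p)))
    (by simpa [ZMod.card] using hs1) (f := fun q => (q.1 : ZMod p) - t * q.2) (by simp [Set.MapsTo])
  simp only [Finset.mem_product, Finset.mem_range] at hu hv heq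
  set x : ℤ := (u : ℤ) - u'
  set y : ℤ := (v : ℤ) - v'
  have hx : x ^ 2 < p := by
    have : |x| ≤ s := by rw [abs_le]; constructor <;> omega
    have h2 := sq_le_sq' (abs_le.1 this).1 (abs_le.1 this).2
    have : (s:ℤ) * s < p := by exact_mod_cast hs2
    nlinarith
  have hy : y ^ 2 < p := by
    have : |y| ≤ s := by rw [abs_le]; constructor <;> omega
    have h2 := sq_le_sq' (abs_le.1 this).1 (abs_le.1 this).2
    have : (s:ℤ) * s < p := by exact_mod_cast hs2
    nlinarith
  have hxy : ¬ (x = 0 ∧ y = 0) := by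
    rintro ⟨h1, h2⟩
    apply hne
    simp only [Prod.mk.injEq]
    omega
  have hpos : 0 < x ^ 2 - x * y + y ^ 2 := by
    by_contra hcon
    apply hxy
    constructor
    · have : x ^ 2 = 0 := by nlinarith [sq_nonneg (2 * y - x), sq_nonneg x]
      simpa using this
    · have : y ^ 2 = 0 := by nlinarith [sq_nonneg (2 * x - y), sq_nonneg y]
      simpa using this
  have hlt : x ^ 2 - x * y + y ^ 2 < 3 * p := by nlinarith [sq_nonneg (x + y)]
  have hdvd : (p : ℤ) ∣ x ^ 2 - x * y + y ^ 2 := by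
    rw [← ZMod.intCast_zmod_eq_zero_iff_dvd]
    have hX : (x : ZMod p) = t * (y : ZMod p) := by
      simp only [x, y]; push_cast; linear_combination heq
    push_cast
    rw [hX]
    linear_combination (y : ZMod p) ^ 2 * ht
  obtain ⟨k, hk⟩ := hdvd
  have hpz : (0:ℤ) < p := by exact_mod_cast hp.pos
  have hk1 : 0 < k := by
    rw [hk] at hpos
    exact (mul_pos_iff_of_pos_left hpz).1 hpos
  have hk2 : k < 3 := by
    by_contra h
    nlinarith
  interval_cases k
  · exact ⟨x, y, by linarith⟩
  · exfalso
    have hp2 : (p:ℤ) % 2 = 1 := by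
      rcases hp.eq_two_or_odd with h | h
      · omega
      · omega
    have hev : x % 2 = 0 ∧ y % 2 = 0 := by
      have h2 : (x ^ 2 - x * y + y ^ 2) % 2 = 0 := by omega
      rcases Int.emod_two_eq_zero_or_one x with h | h <;>
        rcases Int.emod_two_eq_zero_or_one y with h' | h' <;>
        simp [pow_two, Int.sub_emod, Int.add_emod, Int.mul_emod, h, h'] at h2 ⊢
    obtain ⟨a, ha⟩ := Int.dvd_of_emod_eq_zero hev.1
    obtain ⟨b, hb⟩ := Int.dvd_of_emod_eq_zero hev.2
    rw [ha, hb] at hk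
    have : (p:ℤ) = 2 * (a ^ 2 - a * b + b ^ 2) := by linarith
    omega

lemma RR_split (p m : ℕ) (hp : p.Prime) (h3 : p % 3 = 1) :
    (RR (p * m)).card + (if p ∣ m then (RR (m / p)).card else 0) = 2 * (RR m).card := by
  obtain ⟨c, d, hcd⟩ := exists_form p hp h3
  have hpz : (p:ℤ) ≠ 0 := by exact_mod_cast hp.pos.ne'
  have hpr : Prime (p:ℤ) := Nat.prime_iff_prime_int.1 hp
  have hpd : ¬ (p:ℤ) ∣ d := by
    rintro ⟨e, rfl⟩
    have h1 : (p:ℤ) ∣ c ^ 2 := ⟨1 + c * e - p * e ^ 2, by linear_combination hcd⟩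
    obtain ⟨f, rfl⟩ := hpr.dvd_of_dvd_pow h1
    have : (p:ℤ) * (p * (f ^ 2 - f * e + e ^ 2)) = p * 1 := by linear_combination hcd
    have := mul_left_cancel₀ hpz this
    exact hpr.not_isUnit (IsUnit.of_mul_eq_one _ this)
  -- the two images
  set A := (RR m).image (fun z => (c * z.1 - d * z.2, c * z.2 + d * z.1 - d * z.2)) with hA
  set B := (RR m).image (fun z => ((c - d) * z.1 + d * z.2, c * z.2 - d * z.1)) with hB
  have cA : A.card = (RR m).card := by
    apply Finset.card_image_of_injective
    rintro ⟨x, y⟩ ⟨x', y'⟩ h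
    simp only [Prod.mk.injEq] at h ⊢
    obtain ⟨h1, h2⟩ := h
    constructor
    · apply mul_left_cancel₀ hpz; rw [← hcd]; linear_combination (c - d) * h1 + d * h2
    · apply mul_left_cancel₀ hpz; rw [← hcd]; linear_combination (-d) * h1 + c * h2
  have cB : B.card = (RR m).card := by
    apply Finset.card_image_of_injective
    rintro ⟨x, y⟩ ⟨x', y'⟩ h
    simp only [Prod.mk.injEq] at h ⊢
    obtain ⟨h1, h2⟩ := h
    constructor
    · apply mul_left_cancel₀ hpz; rw [← hcd]; linear_combination c * h1 - d * h2
    · apply mul_left_cancel₀ hpz; rw [← hcd]; linear_combination d * h1 + (c - d) * h2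
  have mA : ∀ x y, (x, y) ∈ A ↔ (x, y) ∈ RR (p * m) ∧ (p:ℤ) ∣ y * c - x * d := by
    intro x y
    simp only [hA, Finset.mem_image, mem_RR, Prod.mk.injEq, Prod.exists]
    constructor
    · rintro ⟨u, v, h1, rfl, rfl⟩
      push_cast
      refine ⟨by rw [← h1, ← hcd]; ring, v, by rw [← hcd]; ring⟩
    · rintro ⟨h1, v, hv⟩
      have h2 : (p:ℤ) ∣ (x * (c - d) + y * d) ^ 2 := by
        refine ⟨p * m - p * v ^ 2 + (x * (c - d) + y * d) * v, ?_⟩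
        push_cast at h1
        have : (x * (c - d) + y * d) ^ 2 - (x * (c - d) + y * d) * (y * c - x * d) + (y * c - x * d) ^ 2
          = p * (p * m) := by rw [← h1, ← hcd]; ring
        rw [hv] at this
        linear_combination this
      obtain ⟨u, hu⟩ := hpr.dvd_of_dvd_pow h2
      refine ⟨u, v, ?_, ?_, ?_⟩
      · apply mul_left_cancel₀ (pow_ne_zero 2 hpz)
        push_cast at h1
        have : (x * (c - d) + y * d) ^ 2 - (x * (c - d) + y * d) * (y * c - x * d) + (y * c - x * d) ^ 2
          = p * (p * m) := by rw [← h1, ← hcd]; ring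
        rw [hv, hu] at this
        linear_combination this
      · apply mul_left_cancel₀ hpz
        linear_combination (-c) * hu + d * hv + x * hcd
      · apply mul_left_cancel₀ hpz
        linear_combination (-d) * hu + (d - c) * hv + y * hcd
  have mB : ∀ x y, (x, y) ∈ B ↔ (x, y) ∈ RR (p * m) ∧ (p:ℤ) ∣ c * y + d * x - d * y := by
    intro x y
    simp only [hB, Finset.mem_image, mem_RR, Prod.mk.injEq, Prod.exists]
    constructor
    · rintro ⟨u, v, h1, rfl, rfl⟩
      push_cast
      refine ⟨by rw [← h1, ← hcd]; ring, v, by rw [← hcd]; ring⟩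
    · rintro ⟨h1, v, hv⟩
      have this : (c * x - d * y) ^ 2 - (c * x - d * y) * (c * y + d * x - d * y) + (c * y + d * x - d * y) ^ 2
          = p * (p * m) := by push_cast at h1; rw [← h1, ← hcd]; ring
      have h2 : (p:ℤ) ∣ (c * x - d * y) ^ 2 := by
        refine ⟨p * m - p * v ^ 2 + (c * x - d * y) * v, ?_⟩
        rw [hv] at this
        linear_combination this
      obtain ⟨u, hu⟩ := hpr.dvd_of_dvd_pow h2
      refine ⟨u, v, ?_, ?_, ?_⟩
      · apply mul_left_cancel₀ (pow_ne_zero 2 hpz)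
        rw [hv, hu] at this
        linear_combination this
      · apply mul_left_cancel₀ hpz
        linear_combination (d - c) * hu - d * hv + x * hcd
      · apply mul_left_cancel₀ hpz
        linear_combination d * hu - c * hv + y * hcd
  have hU : RR (p * m) = A ∪ B := by
    ext ⟨x, y⟩
    rw [Finset.mem_union, mA, mB, ← and_or_left]
    constructor
    · intro h
      refine ⟨h, ?_⟩
      rw [mem_RR] at h
      apply hpr.dvd_or_dvd
      refine ⟨y ^ 2 - d ^ 2 * m, ?_⟩
      push_cast at h
      linear_combination y ^ 2 * hcd - d ^ 2 * h
    · exact fun h => h.1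
  have hI : (A ∩ B).card = if p ∣ m then (RR (m / p)).card else 0 := by
    apply card_scale p m hp
    rintro ⟨x, y⟩
    rw [Finset.mem_inter, mA, mB]
    constructor
    · rintro ⟨⟨h, h1⟩, _, h2⟩
      refine ⟨h, ?_⟩
      rw [mem_RR] at h
      push_cast at h
      have h4 : (p:ℤ) ∣ d * (2 * x - y) := by
        have := dvd_sub h2 h1
        have e : c * y + d * x - d * y - (y * c - x * d) = d * (2 * x - y) := by ring
        rwa [e] at this
      obtain ⟨k, hk⟩ := (hpr.dvd_or_dvd h4).resolve_left hpd
      have h5 : (p:ℤ) ∣ 3 * y ^ 2 := ⟨4 * m - p * k ^ 2, by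
        have : (2 * x - y) ^ 2 + 3 * y ^ 2 = 4 * (p * m) := by rw [← h]; ring
        rw [hk] at this
        linear_combination this⟩
      have hsmall : ∀ q : ℕ, q.Prime → q ≠ p → ¬ (p:ℤ) ∣ q := by
        intro q hq hqp hd
        have : p ∣ q := by exact_mod_cast hd
        exact hqp ((Nat.prime_dvd_prime_iff_eq hp hq).1 this).symm
      have hy : (p:ℤ) ∣ y := by
        rcases hpr.dvd_or_dvd h5 with h6 | h6
        · exact absurd h6 (hsmall 3 Nat.prime_three (by omega))
        · exact hpr.dvd_of_dvd_pow h6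
      refine ⟨?_, hy⟩
      have h7 : (p:ℤ) ∣ 2 * x := by
        have := dvd_add (Dvd.intro k hk.symm) hy
        simpa using this
      rcases hpr.dvd_or_dvd h7 with h6 | h6
      · exact absurd h6 (hsmall 2 Nat.prime_two (by omega))
      · exact h6
    · rintro ⟨h, h1, h2⟩
      simp only at h1 h2
      exact ⟨⟨h, dvd_sub (h2.mul_right c) (h1.mul_right d)⟩, h,
        dvd_sub (dvd_add (h2.mul_left c) (h1.mul_left d)) (h2.mul_left d)⟩
  rw [hU, ← hI, Finset.card_union_add_card_inter, cA, cB]; ring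

lemma RR_eq (n : ℕ) (hn : 0 < n) (h3 : n % 3 ≠ 0) : ((RR n).card : ℤ) = 6 * EE n := by
  induction n using Nat.strong_induction_on with
  | _ n ih =>
  by_cases h1 : n = 1
  · subst h1
    decide +kernel
  obtain ⟨p, hp, m, rfl⟩ := Nat.exists_prime_and_dvd h1
  have hm : 0 < m := Nat.pos_of_mul_pos_left hn |> fun h => h
  have hm3 : m % 3 ≠ 0 := fun h => h3 (by rw [Nat.mul_mod, h]; simp)
  have hp3 : p % 3 ≠ 0 := fun h => h3 (by rw [Nat.mul_mod, h]; simp)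
  have hlt : m < p * m := by nlinarith [hp.two_le]
  have i1 := ih m hlt hm hm3
  have i2 : ((if p ∣ m then (RR (m / p)).card else 0 : ℕ) : ℤ) = 6 * (if p ∣ m then EE (m / p) else 0) := by
    split_ifs with h
    · obtain ⟨k, rfl⟩ := h
      rw [Nat.mul_div_cancel_left k hp.pos]
      have hk3 : k % 3 ≠ 0 := fun h => hm3 (by rw [Nat.mul_mod, h]; simp)
      have hk : 0 < k := by omega
      exact ih k (by nlinarith [hp.two_le]) hk hk3
    · simp
  rw [EE_rec p m hp hm]
  have : p % 3 = 1 ∨ p % 3 = 2 := by omega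
  rcases this with h | h
  · have hX : XX p 1 = 1 := by simp [XX, h]
    have := RR_split p m hp h
    have := congrArg (Nat.cast : ℕ → ℤ) this
    rw [hX]
    rw [Nat.cast_add, i2] at this
    push_cast at this
    linarith
  · have hX : XX p 1 = -1 := by simp [XX, h]
    rw [RR_inert p m hp h, hX, i2]
    ring


def CC (n : ℕ) : Finset (ℕ × ℕ) :=
  (Finset.range (2 * n + 1) ×ˢ Finset.range (2 * n + 1)).filter
    (fun q => q.1 * q.1 + q.2 * q.2 + q.2 = n + q.1 * q.2)

lemma mem_CC (n a b : ℕ) : (a, b) ∈ CC n ↔ a * a + b * b + b = n + a * b := by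
  simp only [CC, Finset.mem_filter, Finset.mem_product, Finset.mem_range]
  refine ⟨fun h => h.2, fun h => ⟨?_, h⟩⟩
  zify at h
  have hb : b ≤ n := by
    zify
    nlinarith [sq_nonneg (2 * (a:ℤ) - b), sq_nonneg (b : ℤ)]
  have ha : a ≤ 2 * n := by
    zify
    rcases Nat.eq_zero_or_pos a with h0 | h0
    · subst h0; simp
    · have : (1:ℤ) ≤ a := by exact_mod_cast h0
      nlinarith [sq_nonneg (2 * (b:ℤ) - a)]
  omega

lemma card_CC (n : ℕ) : 6 * (CC n).card = (RR (3 * n + 1)).card := by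
  classical
  set R := RR (3 * n + 1) with hR
  have hm : ∀ x y, (x, y) ∈ R ↔ x ^ 2 - x * y + y ^ 2 = 3 * (n:ℤ) + 1 := by
    intro x y; rw [hR, mem_RR]; push_cast; rfl
  set M := R.filter (fun q => (2 * q.1 - q.2) % 3 = 1) with hM
  set M' := R.filter (fun q => ¬ (2 * q.1 - q.2) % 3 = 1) with hM'
  set T1 := M.filter (fun q => 0 < 2 * q.1 - q.2 ∧ 0 < q.1 + q.2) with hT1
  set T2 := M.filter (fun q => q.1 + q.2 < 0 ∧ q.1 + q.2 < 2 * q.1 - q.2) with hT2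
  set T3 := M.filter (fun q => 2 * q.1 - q.2 < 0 ∧ 2 * q.1 - q.2 < q.1 + q.2) with hT3
  have hne : ∀ x y, (x, y) ∈ R → (2 * x - y) % 3 ≠ 0 := by
    intro x y h h0
    rw [hm] at h
    obtain ⟨k, hk⟩ : ∃ k, 2 * x - y = 3 * k := ⟨(2 * x - y) / 3, by omega⟩
    have hy : y = 2 * x - 3 * k := by linarith
    subst hy
    ring_nf at h
    omega
  have h1 : M.card + M'.card = R.card := Finset.card_filter_add_card_filter_not _
  have h2 : M.card = M'.card := by
    apply Finset.card_nbij' (fun q => (-q.1, -q.2)) (fun q => (-q.1, -q.2))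
    · rintro ⟨x, y⟩ h
      simp only [hM, hM', Finset.coe_filter, Set.mem_ofPred_eq, hm] at h ⊢
      refine ⟨by linarith [h.1], by omega⟩
    · rintro ⟨x, y⟩ h
      simp only [hM, hM', Finset.coe_filter, Set.mem_ofPred_eq] at h ⊢
      have := hne x y h.1
      simp only [hm] at h ⊢
      refine ⟨by linarith [h.1], by omega⟩
    · rintro ⟨x, y⟩ h; simp
    · rintro ⟨x, y⟩ h; simp
  have h3 : M.card = T1.card + T2.card + T3.card := by
    have : M = (T1 ∪ T2) ∪ T3 := by
      ext ⟨x, y⟩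
      simp only [hT1, hT2, hT3, Finset.mem_union, Finset.mem_filter]
      constructor
      · intro h
        have h' := (Finset.mem_filter.1 h).2
        simp only at h'
        simp only [h, true_and]
        omega
      · tauto
    rw [this, Finset.card_union_of_disjoint, Finset.card_union_of_disjoint]
    · rw [Finset.disjoint_left]
      rintro ⟨x, y⟩ h h'
      simp only [hT1, hT2, hT3, Finset.mem_filter] at h h'
      omega
    · rw [Finset.disjoint_left]
      rintro ⟨x, y⟩ h h'
      simp only [hT1, hT2, hT3, Finset.mem_filter, Finset.mem_union] at h h'
      omega
  have h4 : T1.card = T3.card := by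
    apply Finset.card_nbij' (fun q => (-q.2, q.1 - q.2)) (fun q => (q.2 - q.1, -q.1))
    · rintro ⟨x, y⟩ h
      simp only [hT1, hT3, hM, Finset.coe_filter, Finset.mem_filter, Set.mem_ofPred_eq, hm] at h ⊢
      refine ⟨⟨by linarith [h.1.1], by omega⟩, by omega⟩
    · rintro ⟨x, y⟩ h
      simp only [hT1, hT3, hM, Finset.coe_filter, Finset.mem_filter, Set.mem_ofPred_eq, hm] at h ⊢
      refine ⟨⟨by linarith [h.1.1], by omega⟩, by omega⟩
    · rintro ⟨x, y⟩ h; simp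
    · rintro ⟨x, y⟩ h; simp
  have h5 : T3.card = T2.card := by
    apply Finset.card_nbij' (fun q => (-q.2, q.1 - q.2)) (fun q => (q.2 - q.1, -q.1))
    · rintro ⟨x, y⟩ h
      simp only [hT3, hT2, hM, Finset.coe_filter, Finset.mem_filter, Set.mem_ofPred_eq, hm] at h ⊢
      refine ⟨⟨by linarith [h.1.1], by omega⟩, by omega⟩
    · rintro ⟨x, y⟩ h
      simp only [hT3, hT2, hM, Finset.coe_filter, Finset.mem_filter, Set.mem_ofPred_eq, hm] at h ⊢
      refine ⟨⟨by linarith [h.1.1], by omega⟩, by omega⟩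
    · rintro ⟨x, y⟩ h; simp
    · rintro ⟨x, y⟩ h; simp
  have h6 : (CC n).card = T1.card := by
    apply Finset.card_nbij' (fun (q : ℕ × ℕ) => ((q.1:ℤ) + q.2 + 1, 2 * (q.2:ℤ) + 1 - q.1))
      (fun (q : ℤ × ℤ) => (((2 * q.1 - q.2) / 3).toNat, ((q.1 + q.2) / 3).toNat))
    · rintro ⟨a, b⟩ h
      rw [Finset.mem_coe, mem_CC] at h
      zify at h
      simp only [hT1, hM, Finset.coe_filter, Finset.mem_filter, Set.mem_ofPred_eq, hm]
      refine ⟨⟨by linarith, by omega⟩, by omega⟩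
    · rintro ⟨x, y⟩ h
      simp only [hT1, hM, Finset.coe_filter, Finset.mem_filter, Set.mem_ofPred_eq, hm] at h
      obtain ⟨a, ha⟩ : ∃ a : ℕ, 2 * x - y = 3 * a + 1 := ⟨((2 * x - y) / 3).toNat, by omega⟩
      obtain ⟨b, hb⟩ : ∃ b : ℕ, x + y = 3 * b + 2 := ⟨((x + y) / 3).toNat, by omega⟩
      have e1 : ((2 * x - y) / 3).toNat = a := by omega
      have e2 : ((x + y) / 3).toNat = b := by omega
      simp only [e1, e2, Finset.mem_coe, mem_CC]
      have hx : x = a + b + 1 := by omega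
      have hy : y = 2 * b + 1 - a := by omega
      zify
      have := h.1.1
      subst hx hy
      linarith
    · rintro ⟨a, b⟩ h
      simp only [Prod.mk.injEq]
      omega
    · rintro ⟨x, y⟩ h
      simp only [hT1, hM, Finset.coe_filter, Finset.mem_filter, Set.mem_ofPred_eq, hm] at h
      simp only [Prod.mk.injEq]
      omega
  omega

lemma CC_eq (n : ℕ) : ((CC n).card : ℤ) = EE (3 * n + 1) := by
  have h1 := card_CC n
  have h2 := RR_eq (3 * n + 1) (by omega) (by omega)
  omega


def WW (a b : ℕ) : List ℕ :=
  if a = 0 ∧ b = 0 then [] else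
    if b < a then (2 * a - b - 1) :: WW (a - 1) b else (2 * b - a) :: WW a (b - 1)
termination_by a + b

lemma WW_zero : WW 0 0 = [] := by rw [WW]; simp

lemma WW_a (a b : ℕ) (h : b ≤ a) : WW (a + 1) b = (2 * a + 1 - b) :: WW a b := by
  rw [WW, if_neg (by omega), if_pos (by omega)]
  congr 1
  omega

lemma WW_b (a b : ℕ) (h : a ≤ b + 1) : WW a (b + 1) = (2 * b + 2 - a) :: WW a b := by
  rw [WW, if_neg (by omega), if_neg (by omega)]
  congr 1

lemma WW_ind (P : ℕ → ℕ → List ℕ → Prop) (h0 : P 0 0 [])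
    (ha : ∀ a b, b ≤ a → P a b (WW a b) → P (a + 1) b ((2 * a + 1 - b) :: WW a b))
    (hb : ∀ a b, a ≤ b + 1 → P a b (WW a b) → P a (b + 1) ((2 * b + 2 - a) :: WW a b)) :
    ∀ s a b, a + b = s → P a b (WW a b) := by
  intro s
  induction s with
  | zero =>
    intro a b h
    obtain ⟨rfl, rfl⟩ : a = 0 ∧ b = 0 := by omega
    rw [WW_zero]; exact h0
  | succ s ih =>
    intro a b h
    by_cases hab : b < a
    · obtain ⟨a', rfl⟩ : ∃ a', a = a' + 1 := ⟨a - 1, by omega⟩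
      rw [WW_a a' b (by omega)]
      exact ha a' b (by omega) (ih _ _ (by omega))
    · obtain ⟨b', rfl⟩ : ∃ b', b = b' + 1 := ⟨b - 1, by omega⟩
      rw [WW_b a b' (by omega)]
      exact hb a b' (by omega) (ih _ _ (by omega))

lemma WW_length (a b : ℕ) : (WW a b).length = a + b := by
  refine WW_ind (fun a b w => w.length = a + b) (by simp) ?_ ?_ _ a b rfl <;>
  · intro a b h ih
    simp only [List.length_cons, ih]; omega

lemma WW_sum (a b : ℕ) : a * a + b * b + b = (WW a b).sum + a * b := by
  refine WW_ind (fun a b w => a * a + b * b + b = w.sum + a * b) (by simp) ?_ ?_ _ a b rfl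
  · intro a b h ih
    simp only [List.sum_cons]
    obtain ⟨k, rfl⟩ := Nat.exists_eq_add_of_le h
    have : 2 * (b + k) + 1 - b = b + 2 * k + 1 := by omega
    rw [this]
    linarith
  · intro a b h ih
    simp only [List.sum_cons]
    zify at ih ⊢
    rw [Nat.cast_sub (by omega)]
    push_cast
    linarith

lemma WW_pos (a b : ℕ) : ∀ x ∈ WW a b, 0 < x := by
  refine WW_ind (fun a b w => ∀ x ∈ w, 0 < x) (by simp) ?_ ?_ _ a b rfl <;>
  · intro a b h ih
    simp only [List.mem_cons, forall_eq_or_imp]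
    exact ⟨by omega, ih⟩

lemma WW_sorted (a b : ℕ) : (WW a b).Pairwise (· ≥ ·) ∧ ∀ x ∈ WW a b, x ≤ max (2 * a - b - 1) (2 * b - a) := by
  refine WW_ind (fun a b w => w.Pairwise (· ≥ ·) ∧ ∀ x ∈ w, x ≤ max (2 * a - b - 1) (2 * b - a)) (by simp) ?_ ?_ _ a b rfl <;>
  · intro a b h ih
    simp only [List.mem_cons, forall_eq_or_imp, List.pairwise_cons]
    refine ⟨⟨fun x hx => ?_, ih.1⟩, by omega, fun x hx => ?_⟩
    · have := ih.2 x hx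
      omega
    · have := ih.2 x hx
      omega

def beads : List ℕ → Finset ℕ
  | [] => ∅
  | h :: t => insert (h + t.length) (beads t)

lemma mem_beads (w : List ℕ) (x : ℕ) :
    x ∈ beads w ↔ ∃ i, ∃ h : i < w.length, x = w[i] + (w.length - 1 - i) := by
  induction w with
  | nil => simp [beads]
  | cons h t ih =>
    simp only [beads, Finset.mem_insert, ih]
    constructor
    · rintro (rfl | ⟨i, hi, rfl⟩)
      · exact ⟨0, by simp, by simp⟩
      · refine ⟨i + 1, by simpa using hi, ?_⟩
        simp only [List.getElem_cons_succ, List.length_cons]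
        omega
    · rintro ⟨i, hi, rfl⟩
      rcases i with _ | i
      · left; simp
      · right
        refine ⟨i, by simpa using hi, ?_⟩
        simp only [List.getElem_cons_succ, List.length_cons]
        omega

lemma beads_lt (t : List ℕ) (h : ℕ) (ht : ∀ x ∈ t, x ≤ h) : ∀ x ∈ beads t, x < h + t.length := by
  induction t with
  | nil => simp [beads]
  | cons y t ih =>
    intro x hx
    simp only [beads, Finset.mem_insert, List.length_cons] at hx ⊢
    simp only [List.mem_cons, forall_eq_or_imp] at ht
    rcases hx with rfl | hx
    · omega
    · have := ih ht.2 x hx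
      omega

lemma WW_beads (a b : ℕ) : ∀ x, x ∈ beads (WW a b) ↔ (x % 3 = 1 ∧ x < 3 * a) ∨ (x % 3 = 2 ∧ x < 3 * b) := by
  refine WW_ind (fun a b w => ∀ x, x ∈ beads w ↔ (x % 3 = 1 ∧ x < 3 * a) ∨ (x % 3 = 2 ∧ x < 3 * b)) (by simp [beads]) ?_ ?_ _ a b rfl <;>
  · intro a b h ih x
    simp only [beads, Finset.mem_insert, ih, WW_length]
    omega

lemma WW_inj (a b a' b' : ℕ) (h : WW a b = WW a' b') : a = a' ∧ b = b' := by
  have h1 := fun x => (WW_beads a b x).symm.trans ((by rw [h] : _ ↔ _).trans (WW_beads a' b' x))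
  have e1 := h1 (3 * a + 1)
  have e2 := h1 (3 * a' + 1)
  have e3 := h1 (3 * b + 2)
  have e4 := h1 (3 * b' + 2)
  omega

lemma closed_WW (w : List ℕ) (hs : w.Pairwise (· ≥ ·)) (hp : ∀ x ∈ w, 0 < x)
    (hc : ∀ x ∈ beads w, 3 ≤ x → x - 3 ∈ beads w) : ∃ a b, w = WW a b := by
  induction w with
  | nil => exact ⟨0, 0, WW_zero.symm⟩
  | cons h t ih =>
    rw [List.pairwise_cons] at hs
    have hlt := beads_lt t h hs.1
    simp only [beads, Finset.mem_insert, List.mem_cons, forall_eq_or_imp] at hc hp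
    obtain ⟨a, b, rfl⟩ := ih hs.2 hp.2 (by
      intro x hx h3
      rcases hc.2 x hx h3 with h | h
      · have := hlt x hx
        omega
      · exact h)
    have hc1 := hc.1
    rw [WW_length] at hc1 hlt
    simp only [WW_beads] at hc1 hlt
    have hh := hp.1
    have l1 := hlt (3 * a - 2)
    have l2 := hlt (3 * b - 1)
    by_cases hm : (h + (a + b)) % 3 = 1
    · refine ⟨a + 1, b, ?_⟩
      rw [WW_a a b (by omega)]
      congr 1
      omega
    · refine ⟨a, b + 1, ?_⟩
      rw [WW_b a b (by omega)]
      congr 1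
      omega

lemma core_closed (μ : YoungDiagram) (hc : μ.IsThreeCore) (i : ℕ) (hi : i < μ.colLen 0)
    (h3 : 3 ≤ μ.rowLen i + (μ.colLen 0 - 1 - i)) :
    ∃ i', i' < μ.colLen 0 ∧ μ.rowLen i' + (μ.colLen 0 - 1 - i') + 3 = μ.rowLen i + (μ.colLen 0 - 1 - i) := by
  classical
  by_contra hcon
  push Not at hcon
  set r := μ.colLen 0 with hr
  obtain ⟨t, ht⟩ : ∃ t, μ.rowLen i + (r - 1 - i) = t + 3 := ⟨_, (Nat.sub_add_cancel h3).symm⟩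
  have hex : ∃ k, i < k ∧ ¬ (k < r ∧ t < μ.rowLen k + (r - 1 - k)) := ⟨r, hi, by omega⟩
  obtain ⟨h1, h2⟩ := Nat.find_spec hex
  have hmin : ∀ m, m < Nat.find hex → ¬ (i < m ∧ ¬ (m < r ∧ t < μ.rowLen m + (r - 1 - m))) :=
    fun m => Nat.find_min hex
  generalize Nat.find hex = k at *
  have h4 : k - 1 < r ∧ t < μ.rowLen (k - 1) + (r - 1 - (k - 1)) := by
    by_cases hk : i = k - 1
    · rw [← hk]; omega
    · have := hmin (k - 1) (by omega)
      by_contra h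
      exact this ⟨by omega, h⟩
  have hpos : ∀ m, 0 < μ.rowLen m ↔ m < r := by
    intro m
    rw [hr, ← YoungDiagram.mem_iff_lt_colLen, YoungDiagram.mem_iff_lt_rowLen]
  have hk1 := hpos k
  have h5 : k < r → μ.rowLen k + (r - 1 - k) < t := by
    intro hk
    have := hcon k hk
    omega
  obtain ⟨j, hj⟩ : ∃ j, j + r = t + k := ⟨t + k - r, by omega⟩
  have c1 : k - 1 < μ.colLen j := by
    rw [← YoungDiagram.mem_iff_lt_colLen, YoungDiagram.mem_iff_lt_rowLen]
    omega
  have c2 : ¬ k < μ.colLen j := by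
    rw [← YoungDiagram.mem_iff_lt_colLen, YoungDiagram.mem_iff_lt_rowLen]
    omega
  have c3 : (i, j) ∈ μ := by
    rw [YoungDiagram.mem_iff_lt_colLen]
    omega
  have := hc (i, j) c3
  apply this
  have : μ.hookLength i j = 3 := by
    unfold YoungDiagram.hookLength
    omega
  simp [this]

lemma closed_core (μ : YoungDiagram)
    (hc : ∀ i, i < μ.colLen 0 → 3 ≤ μ.rowLen i + (μ.colLen 0 - 1 - i) →
    ∃ i', i' < μ.colLen 0 ∧ μ.rowLen i' + (μ.colLen 0 - 1 - i') + 3 = μ.rowLen i + (μ.colLen 0 - 1 - i)) :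
    μ.IsThreeCore := by
  rintro ⟨i, j⟩ hm ⟨q, hq⟩
  simp only [YoungDiagram.hookLength] at hq
  have key : ∀ q i, i < μ.colLen 0 → 3 * q ≤ μ.rowLen i + (μ.colLen 0 - 1 - i) →
      ∃ i', i' < μ.colLen 0 ∧ μ.rowLen i' + (μ.colLen 0 - 1 - i') + 3 * q = μ.rowLen i + (μ.colLen 0 - 1 - i) := by
    intro q
    induction q with
    | zero => intro i hi _; exact ⟨i, hi, by simp⟩
    | succ q ih =>
      intro i hi h
      obtain ⟨i1, h1, e1⟩ := ih i hi (by omega)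
      obtain ⟨i2, h2, e2⟩ := hc i1 h1 (by omega)
      exact ⟨i2, h2, by omega⟩
  rw [YoungDiagram.mem_cells] at hm
  have m1 := YoungDiagram.mem_iff_lt_colLen.1 hm
  have m2 := YoungDiagram.mem_iff_lt_rowLen.1 hm
  have m3 := μ.colLen_anti 0 j (Nat.zero_le _)
  obtain ⟨i', h', e'⟩ := key q i (by omega) (by omega)
  have : j < μ.rowLen i' ↔ i' < μ.colLen j := by
    rw [← YoungDiagram.mem_iff_lt_colLen, YoungDiagram.mem_iff_lt_rowLen]
  omega

lemma core_iff (μ : YoungDiagram) :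
    μ.IsThreeCore ↔ ∀ x ∈ beads μ.rowLens, 3 ≤ x → x - 3 ∈ beads μ.rowLens := by
  simp only [mem_beads, YoungDiagram.get_rowLens, YoungDiagram.length_rowLens]
  constructor
  · rintro hc x ⟨i, hi, rfl⟩ h3
    obtain ⟨i', h', e'⟩ := core_closed μ hc i hi h3
    exact ⟨i', h', by omega⟩
  · intro h
    apply closed_core
    intro i hi h3
    obtain ⟨i', h', e'⟩ := h _ ⟨i, hi, rfl⟩ h3
    exact ⟨i', h', by omega⟩

lemma card_cells (w : List ℕ) : (YoungDiagram.cellsOfRowLens w).card = w.sum := by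
  induction w with
  | nil => rfl
  | cons h t ih =>
    rw [YoungDiagram.cellsOfRowLens, Finset.card_union_of_disjoint]
    · simp [ih]
    · rw [Finset.disjoint_left]
      rintro ⟨x, y⟩ h1 h2
      simp at h1 h2
      omega

def WD (q : ℕ × ℕ) : YoungDiagram := YoungDiagram.ofRowLens (WW q.1 q.2) (WW_sorted q.1 q.2).1.sortedGE

lemma WD_rowLens (q : ℕ × ℕ) : (WD q).rowLens = WW q.1 q.2 :=
  YoungDiagram.rowLens_ofRowLens_eq_self (WW_pos q.1 q.2)

lemma WD_card (q : ℕ × ℕ) : (WD q).card = (WW q.1 q.2).sum := card_cells _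

lemma WD_inj : Function.Injective WD := by
  rintro ⟨a, b⟩ ⟨a', b'⟩ h
  have h := congrArg YoungDiagram.rowLens h
  rw [WD_rowLens, WD_rowLens] at h
  have := WW_inj _ _ _ _ h
  simp_all

lemma WD_core (q : ℕ × ℕ) : (WD q).IsThreeCore := by
  rw [core_iff, WD_rowLens]
  simp only [WW_beads]
  omega

lemma core_WD (μ : YoungDiagram) (h : μ.IsThreeCore) : ∃ q, WD q = μ := by
  rw [core_iff] at h
  obtain ⟨a, b, hab⟩ := closed_WW _ μ.rowLens_sorted.pairwise μ.pos_of_mem_rowLens h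
  refine ⟨(a, b), ?_⟩
  apply YoungDiagram.equivListRowLens.injective
  apply Subtype.ext
  change (WD (a, b)).rowLens = μ.rowLens
  rw [WD_rowLens, hab]


lemma GG_mul (m n : ℕ) (h : m.Coprime n) : GG (m * n) = GG m * GG n := by
  let f : ArithmeticFunction ℤ := ⟨fun n => XX n 1, by simp [XX]⟩
  let g : ArithmeticFunction ℤ := ⟨fun n => (n:ℤ) ^ 2, by simp⟩
  have hf : f.IsMultiplicative := ⟨by simp [f, XX], fun {m n} _ => XX_mul m n⟩
  have hg : g.IsMultiplicative := ⟨by simp [g], fun {m n} _ => by simp [g, mul_pow]⟩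
  have hG : ∀ n, GG n = (f * g) n := by
    intro n
    rw [ArithmeticFunction.mul_apply]
    rfl
  rw [hG, hG, hG, (hf.mul hg).map_mul_of_coprime h]

lemma XX_pow (p : ℕ) (hp3 : p % 3 = 1) (i : ℕ) : XX (p ^ i) 1 = 1 := by
  induction i with
  | zero => simp [XX]
  | succ i ih => rw [pow_succ, XX_mul, ih]; simp [XX, hp3]

lemma GG_pow (p k : ℕ) (hp : p.Prime) (hp3 : p % 3 = 1) :
    ((p:ℤ) ^ 2 - 1) * GG (p ^ k) = (p:ℤ) ^ (2 * (k + 1)) - 1 := by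
  have : GG (p ^ k) = ∑ i ∈ Finset.range (k + 1), ((p:ℤ) ^ 2) ^ i := by
    unfold GG
    rw [Nat.sum_divisorsAntidiagonal' (f := fun a b => XX a 1 * (b:ℤ) ^ 2), Nat.sum_divisors_prime_pow hp]
    apply Finset.sum_congr rfl
    intro i hi
    rw [Finset.mem_range] at hi
    rw [Nat.pow_div (by omega) hp.pos, XX_pow p hp3]
    push_cast
    ring
  rw [this, mul_comm, geom_sum_mul, ← pow_mul]

lemma fam {α β : Type*} (U : ℕ → Finset α) (V : ℕ → Finset β) (sa : α → ℕ) (sb : β → ℕ)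
    (PA : α → Prop) (PB : β → Prop) (hU : ∀ i x, x ∈ U i ↔ sa x = i ∧ PA x)
    (hV : ∀ i x, x ∈ V i ↔ sb x = i ∧ PB x) :
    ∃ W : ℕ → Finset (α × β), (∀ m x, x ∈ W m ↔ sa x.1 + sb x.2 = m ∧ PA x.1 ∧ PB x.2) ∧
      ∀ m, (W m).card = ∑ q ∈ Finset.HasAntidiagonal.antidiagonal m, (U q.1).card * (V q.2).card := by
  classical
  refine ⟨fun m => (Finset.HasAntidiagonal.antidiagonal m).biUnion (fun q => U q.1 ×ˢ V q.2), ?_, ?_⟩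
  · rintro m ⟨x, y⟩
    simp only [Finset.mem_biUnion, Finset.HasAntidiagonal.mem_antidiagonal, Finset.mem_product, hU, hV]
    constructor
    · rintro ⟨q, h, ⟨h1, h2⟩, h3, h4⟩
      exact ⟨by omega, h2, h4⟩
    · rintro ⟨h, h2, h3⟩
      exact ⟨(sa x, sb y), h, ⟨rfl, h2⟩, rfl, h3⟩
  · intro m
    rw [Finset.card_biUnion]
    · simp only [Finset.card_product]
    · rintro ⟨a, b⟩ _ ⟨c, d⟩ _ hne
      rw [Function.onFun, Finset.disjoint_left]
      rintro ⟨x, y⟩ h1 h2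
      simp only [Finset.mem_product, hU, hV] at h1 h2
      apply hne
      rw [Prod.mk.injEq]
      omega

lemma B3_eq (n : ℕ) : (B3 n : ℤ) = GG (n + 1) := by
  classical
  let U : ℕ → Finset YoungDiagram := fun i => (CC i).image WD
  have hU : ∀ i x, x ∈ U i ↔ x.card = i ∧ x.IsThreeCore := by
    intro i x
    simp only [U, Finset.mem_image]
    constructor
    · rintro ⟨⟨a, b⟩, h, rfl⟩
      rw [mem_CC] at h
      have := WW_sum a b
      refine ⟨?_, WD_core _⟩
      rw [WD_card]
      simp only
      omega
    · rintro ⟨h1, h2⟩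
      obtain ⟨⟨a, b⟩, rfl⟩ := core_WD x h2
      refine ⟨(a, b), ?_, rfl⟩
      rw [WD_card] at h1
      simp only at h1
      have := WW_sum a b
      rw [mem_CC]
      omega
  have hc : ∀ i, ((U i).card : ℤ) = EE (3 * i + 1) := by
    intro i
    rw [Finset.card_image_of_injective _ WD_inj, CC_eq]
  obtain ⟨V, hV, hVc⟩ := fam U U _ _ _ _ hU hU
  obtain ⟨T, hT, hTc⟩ := fam U V _ _ _ _ hU hV
  have h1 : B3 n = (T n).card := by
    unfold B3
    apply Nat.subtype_card
    intro x
    rw [hT, add_assoc]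
  rw [h1, hTc]
  have h2 := conv2' n
  rw [← Finset.Nat.sum_antidiagonal_swap] at h2
  have h3 : 3 * ((∑ q ∈ Finset.HasAntidiagonal.antidiagonal n, (U q.1).card * (V q.2).card : ℕ) : ℤ) = 3 * GG (n + 1) := by
    rw [← h2]
    push_cast
    rw [Finset.mul_sum]
    apply Finset.sum_congr rfl
    rintro ⟨a, b⟩ _
    simp only [Prod.swap, Prod.fst_swap, Prod.snd_swap]
    rw [← conv1', hVc, ← hc]
    push_cast
    simp only [hc]
    ring
  linarith

theorem B3_mult_one_mod_three (p k n : ℕ) (hp : p.Prime) (hp3 : p % 3 = 1)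
    (hpn : ¬ p ∣ n + 1) :
    (p ^ 2 - 1) * B3 (p ^ k * n + p ^ k - 1) = (p ^ (2 * (k + 1)) - 1) * B3 n := by
  have h0 : 0 < p ^ k := pow_pos hp.pos k
  have e : p ^ k * n + p ^ k - 1 + 1 = p ^ k * (n + 1) := by
    rw [Nat.sub_add_cancel (by omega)]; ring
  have hcop : (p ^ k).Coprime (n + 1) := Nat.Coprime.pow_left k ((Nat.Prime.coprime_iff_not_dvd hp).2 hpn)
  have h1 : 1 ≤ p ^ 2 := Nat.one_le_pow _ _ hp.pos
  have h2 : 1 ≤ p ^ (2 * (k + 1)) := Nat.one_le_pow _ _ hp.pos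
  zify [h1, h2]
  rw [B3_eq, B3_eq, e, GG_mul _ _ hcop, ← mul_assoc, GG_pow p k hp hp3]
end
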